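/- Let Ω ⊂ ℝⁿ be a bounded Lipschitz domain, let f ∈ C²([0,∞)) be convex with f(0) = f'(0) = 0, satisfying the linear growth condition νt − L ≤ f(t) ≤ L(t+1) and the bound f''(t) ≤ L(1+t)⁻¹ for all t ≥ 0, and let T₀ ∈ W^{2,∞}(Ω;ℝ^{N×n}) satisfy ‖T₀‖_{L^∞(Ω;ℝ^{N×n})} < f^∞(1). Then each minimiser u_k ∈ W^{1,2}(Ω;ℝ^N) of 𝔉_k with (u_k)_Ω = 0 belongs to W^{2,2}_loc(Ω;ℝ^N), and for every compact set K ⊂ Ω one has sup_{k∈ℕ} { Σ_{s=1}^{n} ∫_K D_z A(∇u_k)[∂_s∇u_k, ∂_s∇u_k] dx + k⁻¹ ∫_K |∇²u_k|² dx } < ∞, where A(z) = f'(|z|)z/|z| (with A(0)=0). -/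

import Mathlib

open MeasureTheory Filter Topology Set
open scoped ENNReal RealInnerProductSpace

noncomputable section

/-- Euclidean space `ℝⁿ`. -/
abbrev EVec (n : ℕ) := EuclideanSpace ℝ (Fin n)

/-- Frobenius inner product of two "matrices". -/
def mdot {ι κ : Type*} [Fintype ι] [Fintype κ] (A B : ι → κ → ℝ) : ℝ :=
  ∑ a, ∑ i, A a i * B a i

/-- Frobenius norm. -/
noncomputable def mnorm {ι κ : Type*} [Fintype ι] [Fintype κ] (A : ι → κ → ℝ) : ℝ :=
  Real.sqrt (mdot A A)

/-- Euclidean norm of a vector given as a tuple. -/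
noncomputable def vnorm {ι : Type*} [Fintype ι] (v : ι → ℝ) : ℝ :=
  Real.sqrt (∑ a, v a ^ 2)

/-- `Ω ⊆ ℝⁿ` is a (nonempty, open, connected) Lipschitz domain: every boundary point has
a neighbourhood on which `Ω` can be flattened to a half space by a bi-Lipschitz map. -/
def IsLipschitzDomain {n : ℕ} (Ω : Set (EVec n)) : Prop :=
  IsOpen Ω ∧ Ω.Nonempty ∧ IsConnected Ω ∧
  ∀ x ∈ frontier Ω, ∃ (U : Set (EVec n)) (h hinv : EVec n → EVec n) (K : NNReal)
      (e : EVec n),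
    ‖e‖ = 1 ∧ IsOpen U ∧ x ∈ U ∧ LipschitzOnWith K h U ∧
    LipschitzOnWith K hinv (h '' U) ∧ (∀ y ∈ U, hinv (h y) = y) ∧
    h '' (U ∩ Ω) = (h '' U) ∩ {y : EVec n | 0 < ⟪e, y⟫}

/-- `Du` is the weak (distributional) gradient of `u` on `Ω`, and both are integrable;
i.e. `u ∈ W^{1,1}(Ω; ℝ^ι)` with weak gradient `Du`. -/
def HasWeakDerivOn {n : ℕ} {ι : Type*} [Fintype ι] (Ω : Set (EVec n))
    (u : EVec n → ι → ℝ) (Du : EVec n → ι → Fin n → ℝ) : Prop :=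
  IntegrableOn u Ω volume ∧ IntegrableOn Du Ω volume ∧
  ∀ φ : EVec n → ℝ, ContDiff ℝ 1 φ → HasCompactSupport φ → tsupport φ ⊆ Ω →
    ∀ (a : ι) (i : Fin n),
      ∫ x in Ω, u x a * fderiv ℝ φ x (EuclideanSpace.single i 1) =
        - ∫ x in Ω, Du x a i * φ x

/-- `u ∈ W^{1,2}(Ω;ℝ^ι)` with weak gradient `Du`. -/
def MemW12 {n : ℕ} {ι : Type*} [Fintype ι] (Ω : Set (EVec n))
    (u : EVec n → ι → ℝ) (Du : EVec n → ι → Fin n → ℝ) : Prop :=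
  HasWeakDerivOn Ω u Du ∧ IntegrableOn (fun x => vnorm (u x) ^ 2) Ω volume ∧
    IntegrableOn (fun x => mnorm (Du x) ^ 2) Ω volume

/-- vanishing mean value `(u)_Ω = 0`. -/
def ZeroMean {n : ℕ} {ι : Type*} [Fintype ι] (Ω : Set (EVec n))
    (u : EVec n → ι → ℝ) : Prop :=
  ∀ a : ι, ∫ x in Ω, u x a = 0

/-- The `L^∞(Ω)` norm of a matrix field (w.r.t. the pointwise Frobenius norm). -/
noncomputable def linfNormOn {n N : ℕ} (Ω : Set (EVec n))
    (T : EVec n → Fin N → Fin n → ℝ) : ℝ≥0∞ :=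
  essSup (fun x => ENNReal.ofReal (mnorm (T x))) (volume.restrict Ω)

/-- `T ∈ W^{1,∞}(Ω)`: bounded and Lipschitz on `Ω`. -/
def MemW1inf {n N : ℕ} (Ω : Set (EVec n)) (T : EVec n → Fin N → Fin n → ℝ) : Prop :=
  ∃ C : NNReal, (∀ x ∈ Ω, ‖T x‖ ≤ C) ∧ LipschitzOnWith C T Ω

/-- `T ∈ W^{2,∞}(Ω)`: `T` is bounded with bounded Lipschitz derivative on `Ω`. -/
def MemW2inf {n N : ℕ} (Ω : Set (EVec n)) (T : EVec n → Fin N → Fin n → ℝ) : Prop :=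
  ∃ (C : NNReal) (DT : EVec n → EVec n →L[ℝ] (Fin N → Fin n → ℝ)),
    (∀ x ∈ Ω, ‖T x‖ ≤ C) ∧ (∀ x ∈ Ω, HasFDerivWithinAt T (DT x) Ω x) ∧
    (∀ x ∈ Ω, ‖DT x‖ ≤ C) ∧ LipschitzOnWith C DT Ω

/-- The nonlinear map `A(z) = f'(|z|) z / |z|` (equal to `0` at `z = 0`). -/
noncomputable def Amap {N n : ℕ} (f' : ℝ → ℝ) (z : Fin N → Fin n → ℝ) :
    Fin N → Fin n → ℝ :=
  fun a i => (f' (mnorm z) / mnorm z) * z a i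

/-- `u` is a weak solution of the Neumann problem for the integrand `f(|·|)` and datum `T₀`. -/
def IsWeakSolution {n N : ℕ} (Ω : Set (EVec n)) (f' : ℝ → ℝ)
    (T₀ : EVec n → Fin N → Fin n → ℝ)
    (u : EVec n → Fin N → ℝ) (Du : EVec n → Fin N → Fin n → ℝ) : Prop :=
  HasWeakDerivOn Ω u Du ∧
  ∀ φ Dφ, HasWeakDerivOn Ω φ Dφ →
    ∫ x in Ω, mdot (Amap f' (Du x)) (Dφ x) = ∫ x in Ω, mdot (T₀ x) (Dφ x)

/-- The functional `𝔉[w] = ∫_Ω (f(|∇w|) − T₀ · ∇w) dx` (as a function of the gradient). -/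
noncomputable def FF {n N : ℕ} (Ω : Set (EVec n)) (f : ℝ → ℝ)
    (T₀ : EVec n → Fin N → Fin n → ℝ) (Du : EVec n → Fin N → Fin n → ℝ) : ℝ :=
  ∫ x in Ω, (f (mnorm (Du x)) - mdot (T₀ x) (Du x))

/-- The regularised functional `𝔉_k[w] = 𝔉[w] + (2k)⁻¹ ∫_Ω |∇w|² dx`. -/
noncomputable def FFk {n N : ℕ} (Ω : Set (EVec n)) (f : ℝ → ℝ)
    (T₀ : EVec n → Fin N → Fin n → ℝ) (k : ℕ)
    (Du : EVec n → Fin N → Fin n → ℝ) : ℝ :=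
  FF Ω f T₀ Du + (2 * (k : ℝ))⁻¹ * ∫ x in Ω, mnorm (Du x) ^ 2

end

/-- Locally integrable weak (distributional) gradient on `Ω`. -/
def HasLocWeakDerivOn {n : ℕ} {ι : Type*} [Fintype ι] (Ω : Set (EVec n))
    (u : EVec n → ι → ℝ) (Du : EVec n → ι → Fin n → ℝ) : Prop :=
  (∀ K : Set (EVec n), IsCompact K → K ⊆ Ω → IntegrableOn Du K volume) ∧
  ∀ φ : EVec n → ℝ, ContDiff ℝ 1 φ → HasCompactSupport φ → tsupport φ ⊆ Ω →
    ∀ (a : ι) (i : Fin n),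
      ∫ x in Ω, u x a * fderiv ℝ φ x (EuclideanSpace.single i 1) =
        - ∫ x in Ω, Du x a i * φ x

/-- The quadratic form `D_z A(z)[ζ,ζ]`, i.e. the Hessian of `z ↦ f(|z|)` applied to
`(ζ,ζ)`. -/
noncomputable def QA {N n : ℕ} (f' f'' : ℝ → ℝ) (z ζ : Fin N → Fin n → ℝ) : ℝ :=
  if mnorm z = 0 then f'' 0 * mnorm ζ ^ 2
  else f'' (mnorm z) * (mdot z ζ) ^ 2 / mnorm z ^ 2 +
    f' (mnorm z) / mnorm z *
      ((mnorm z ^ 2 * mnorm ζ ^ 2 - (mdot z ζ) ^ 2) / mnorm z ^ 2)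

structure FHyp (f f' f'' : ℝ → ℝ) (L : ℝ) : Prop where
  hL : 0 < L
  hderiv : ∀ t ∈ Set.Ici (0:ℝ), HasDerivWithinAt f (f' t) (Set.Ici 0) t
  hderiv' : ∀ t ∈ Set.Ici (0:ℝ), HasDerivWithinAt f' (f'' t) (Set.Ici 0) t
  hf''cont : ContinuousOn f'' (Set.Ici 0)
  hconv : ConvexOn ℝ (Set.Ici 0) f
  hf0 : f 0 = 0
  hf'0 : f' 0 = 0
  hgrowth : ∀ t ∈ Set.Ici (0:ℝ), f t ≤ L * (t + 1)
  hsec : ∀ t ∈ Set.Ici (0:ℝ), f'' t ≤ L * (1 + t)⁻¹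

namespace FHyp
variable {f f' f'' : ℝ → ℝ} {L : ℝ}

theorem tangent (H : FHyp f f' f'' L) {s t : ℝ} (hs : 0 ≤ s) (ht : 0 ≤ t) :
    f s + f' s * (t - s) ≤ f t := by
  rcases lt_trichotomy s t with h | h | h
  · have := H.hconv.le_slope_of_hasDerivWithinAt hs ht h (H.hderiv s hs)
    rw [slope_def_field, le_div_iff₀ (by linarith)] at this
    linarith
  · simp [h]
  · have := H.hconv.slope_le_of_hasDerivWithinAt ht hs h (H.hderiv s hs)
    rw [slope_def_field, div_le_iff₀ (by linarith)] at this
    linarith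

theorem f_nonneg (H : FHyp f f' f'' L) {t : ℝ} (ht : 0 ≤ t) : 0 ≤ f t := by
  have := H.tangent le_rfl ht
  rw [H.hf0, H.hf'0] at this; linarith

theorem mono (H : FHyp f f' f'' L) : MonotoneOn f' (Ici 0) := by
  intro s hs t ht hst
  rcases hst.eq_or_lt with h | h
  · rw [h]
  · have h1 := H.tangent hs ht
    have h2 := H.tangent ht hs
    have : (f' s - f' t) * (t - s) ≤ 0 := by nlinarith
    nlinarith

theorem f'_nonneg (H : FHyp f f' f'' L) {t : ℝ} (ht : 0 ≤ t) : 0 ≤ f' t := by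
  have := H.mono (mem_Ici.2 le_rfl) ht ht
  rwa [H.hf'0] at this

theorem f''_nonneg (H : FHyp f f' f'' L) {t : ℝ} (ht : 0 ≤ t) : 0 ≤ f'' t := by
  have h := H.mono.derivWithin_nonneg (x := t)
  rwa [(H.hderiv' t ht).derivWithin (uniqueDiffOn_Ici 0 t ht)] at h

theorem f''_le (H : FHyp f f' f'' L) {t : ℝ} (ht : 0 ≤ t) : f'' t ≤ L := by
  refine (H.hsec t ht).trans ?_
  have : (1 + t)⁻¹ ≤ 1 := inv_le_one_of_one_le₀ (by linarith)
  nlinarith [H.hL]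

theorem f'_le (H : FHyp f f' f'' L) {t : ℝ} (ht : 0 ≤ t) : f' t ≤ L * t := by
  have := (convex_Ici (0:ℝ)).norm_image_sub_le_of_norm_hasDerivWithin_le (f := f') (f' := f'')
    (C := L) (fun x hx => H.hderiv' x hx) (fun x hx => by
      rw [Real.norm_eq_abs, abs_of_nonneg (H.f''_nonneg hx)]; exact H.f''_le hx)
      (mem_Ici.2 le_rfl) (mem_Ici.2 ht)
  rw [H.hf'0, sub_zero, sub_zero, Real.norm_eq_abs, Real.norm_eq_abs, abs_of_nonneg ht] at this
  exact (le_abs_self _).trans this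

theorem f'_le' (H : FHyp f f' f'' L) {t : ℝ} (ht : 0 ≤ t) : f' t ≤ 3 * L := by
  rcases le_total t 1 with h | h
  · have := H.f'_le ht
    nlinarith [H.hL]
  · have h1 := H.tangent ht (t := 2 * t) (by linarith)
    have h2 := H.f_nonneg ht
    have h3 := H.hgrowth (2 * t) (mem_Ici.2 (by linarith))
    have h4 : f' t * t ≤ (3 * L) * t := by nlinarith [H.hL]
    exact le_of_mul_le_mul_right h4 (by linarith)

theorem f_cont (H : FHyp f f' f'' L) : ContinuousOn f (Ici 0) :=
  fun t ht => (H.hderiv t ht).continuousWithinAt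

end FHyp

/-- the secant slope `f'(t)/t` -/
noncomputable def aF (f' f'' : ℝ → ℝ) (t : ℝ) : ℝ := if t = 0 then f'' 0 else f' t / t

namespace FHyp
variable {f f' f'' : ℝ → ℝ} {L : ℝ}

theorem aF_nonneg (H : FHyp f f' f'' L) {t : ℝ} (ht : 0 ≤ t) : 0 ≤ aF f' f'' t := by
  unfold aF; split_ifs
  · exact H.f''_nonneg le_rfl
  · exact div_nonneg (H.f'_nonneg ht) ht

theorem aF_le (H : FHyp f f' f'' L) {t : ℝ} (ht : 0 ≤ t) : aF f' f'' t ≤ L := by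
  unfold aF; split_ifs with h
  · exact H.f''_le le_rfl
  · rw [div_le_iff₀ (lt_of_le_of_ne ht (Ne.symm h))]; exact H.f'_le ht

theorem aF_le' (H : FHyp f f' f'' L) {t : ℝ} (ht : 0 ≤ t) : aF f' f'' t * (1 + t) ≤ 4 * L := by
  have h1 := H.aF_le ht
  have h2 : aF f' f'' t * t ≤ 3 * L := by
    unfold aF; split_ifs with h
    · rw [h]; nlinarith [H.hL]
    · rw [div_mul_cancel₀ _ h]; exact H.f'_le' ht
  linarith

theorem aF_cont (H : FHyp f f' f'' L) : ContinuousOn (aF f' f'') (Ici 0) := by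
  intro t ht
  rcases eq_or_ne t 0 with h | h
  · subst h
    have h1 := H.hderiv' 0 ht
    rw [hasDerivWithinAt_iff_tendsto_slope] at h1
    have h2 : ContinuousWithinAt (aF f' f'') (Ici 0 \ {0}) 0 := by
      have : Tendsto (aF f' f'') (𝓝[Ici 0 \ {0}] 0) (𝓝 (f'' 0)) := by
        refine h1.congr' ?_
        filter_upwards [self_mem_nhdsWithin] with x hx
        rw [slope_def_field, H.hf'0, aF, if_neg (by simpa using hx.2)]; simp
      have e : aF f' f'' 0 = f'' 0 := by simp [aF]
      rw [ContinuousWithinAt, e]; exact this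
    have h3 := h2.insert
    rwa [insert_sdiff_singleton, insert_eq_of_mem ht] at h3
  · have : ContinuousWithinAt (fun x => f' x / x) (Ici 0) t :=
      (H.hderiv' t ht).continuousWithinAt.div continuousWithinAt_id h
    refine this.congr_of_eventuallyEq ?_ (by simp [aF, h])
    filter_upwards [mem_nhdsWithin_of_mem_nhds (isOpen_ne.mem_nhds h)] with x hx
    rw [aF, if_neg hx]

end FHyp

section EE
variable {E : Type*} [NormedAddCommGroup E] [InnerProductSpace ℝ E]

/-- second derivative of `f(|z|)` as bilinear form -/
noncomputable def BE (f' f'' : ℝ → ℝ) (z ξ ζ : E) : ℝ :=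
  aF f' f'' ‖z‖ * ⟪ξ, ζ⟫ + (f'' ‖z‖ - aF f' f'' ‖z‖) * (⟪z, ξ⟫ * ⟪z, ζ⟫ / ‖z‖ ^ 2)

noncomputable def AE (f' f'' : ℝ → ℝ) (z : E) : E := aF f' f'' ‖z‖ • z

/-- averaged form along the segment -/
noncomputable def ME (f' f'' : ℝ → ℝ) (z z' ζ : E) : ℝ :=
  ∫ t in (0:ℝ)..1, BE f' f'' (z + t • (z' - z)) ζ ζ

namespace FHyp
variable {f f' f'' : ℝ → ℝ} {L : ℝ}

theorem aFn_cont (H : FHyp f f' f'' L) : Continuous (fun z : E => aF f' f'' ‖z‖) :=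
  H.aF_cont.comp_continuous continuous_norm (fun x => norm_nonneg x)

theorem f''n_cont (H : FHyp f f' f'' L) : Continuous (fun z : E => f'' ‖z‖) :=
  H.hf''cont.comp_continuous continuous_norm (fun x => norm_nonneg x)

theorem BE_cont (H : FHyp f f' f'' L) :
    Continuous (fun p : E × E × E => BE f' f'' p.1 p.2.1 p.2.2) := by
  unfold BE
  refine Continuous.add ((H.aFn_cont.comp continuous_fst).mul (by fun_prop)) ?_
  rw [continuous_iff_continuousAt]
  rintro ⟨z, ξ, ζ⟩
  have hc : Continuous (fun p : E × E × E => f'' ‖p.1‖ - aF f' f'' ‖p.1‖) :=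
    (H.f''n_cont.comp continuous_fst).sub (H.aFn_cont.comp continuous_fst)
  rcases eq_or_ne z 0 with h | h
  · subst h
    have h0 : (f'' ‖(0:E)‖ - aF f' f'' ‖(0:E)‖) = 0 := by simp [aF]
    unfold ContinuousAt
    simp only [h0, zero_mul]
    have hb : Tendsto (fun p : E × E × E => |f'' ‖p.1‖ - aF f' f'' ‖p.1‖| * (‖p.2.1‖ * ‖p.2.2‖))
        (𝓝 (0, ξ, ζ)) (𝓝 0) := by
      have : Continuous (fun p : E × E × E => |f'' ‖p.1‖ - aF f' f'' ‖p.1‖| * (‖p.2.1‖ * ‖p.2.2‖)) :=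
        hc.abs.mul (by fun_prop)
      have h2 := this.tendsto (0, ξ, ζ)
      simp only [h0, abs_zero, zero_mul] at h2
      exact h2
    refine squeeze_zero_norm (fun p => ?_) hb
    rw [Real.norm_eq_abs, abs_mul]
    refine mul_le_mul_of_nonneg_left ?_ (abs_nonneg _)
    rw [abs_div, abs_mul, abs_of_nonneg (sq_nonneg ‖p.1‖)]
    refine div_le_of_le_mul₀ (sq_nonneg _) (by positivity) ?_
    calc |⟪p.1, p.2.1⟫| * |⟪p.1, p.2.2⟫| ≤ (‖p.1‖ * ‖p.2.1‖) * (‖p.1‖ * ‖p.2.2‖) :=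
          mul_le_mul (abs_real_inner_le_norm _ _) (abs_real_inner_le_norm _ _) (abs_nonneg _)
            (by positivity)
      _ = _ := by ring
  · refine hc.continuousAt.mul (ContinuousAt.div (by fun_prop) (by fun_prop) ?_)
    simpa using h

theorem BE_bounds (H : FHyp f f' f'' L) (z ζ : E) :
    0 ≤ BE f' f'' z ζ ζ ∧ BE f' f'' z ζ ζ ≤ L * ‖ζ‖ ^ 2 ∧
      BE f' f'' z ζ ζ * (1 + ‖z‖) ≤ 4 * L * ‖ζ‖ ^ 2 := by
  have ht := norm_nonneg z
  set r := ⟪z, ζ⟫ * ⟪z, ζ⟫ / ‖z‖ ^ 2 with hr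
  have hr0 : 0 ≤ r := by rw [hr]; exact div_nonneg (mul_self_nonneg _) (sq_nonneg _)
  have hr1 : r ≤ ‖ζ‖ ^ 2 := by
    refine div_le_of_le_mul₀ (sq_nonneg _) (by positivity) ?_
    have := abs_real_inner_le_norm z ζ
    have h2 := mul_self_le_mul_self (abs_nonneg _) this
    rw [abs_mul_abs_self] at h2
    linarith
  have e : BE f' f'' z ζ ζ = aF f' f'' ‖z‖ * (‖ζ‖ ^ 2 - r) + f'' ‖z‖ * r := by
    unfold BE; rw [← hr, real_inner_self_eq_norm_sq]; ring
  have a0 := H.aF_nonneg ht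
  have a1 := H.aF_le ht
  have a2 := H.aF_le' ht
  have b0 := H.f''_nonneg ht
  have b1 := H.f''_le ht
  have b2 : f'' ‖z‖ * (1 + ‖z‖) ≤ 4 * L := by
    have := H.hsec _ ht
    rw [← div_eq_mul_inv, le_div_iff₀ (by linarith)] at this
    linarith [H.hL]
  have hs : 0 ≤ ‖ζ‖ ^ 2 - r := by linarith
  rw [e]
  refine ⟨by positivity, ?_, ?_⟩
  · nlinarith [mul_le_mul_of_nonneg_right a1 hs, mul_le_mul_of_nonneg_right b1 hr0]
  · nlinarith [mul_le_mul_of_nonneg_right a2 hs, mul_le_mul_of_nonneg_right b2 hr0]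

theorem hasDerivAt_AE (H : FHyp f f' f'' L) (z w ζ : E) (t : ℝ) :
    HasDerivAt (fun s : ℝ => ⟪AE f' f'' (z + s • w), ζ⟫) (BE f' f'' (z + t • w) w ζ) t := by
  have hl : HasDerivAt (fun s : ℝ => z + s • w) w t := by
    simpa using ((hasDerivAt_id t).smul_const w).const_add z
  by_cases h : z + t • w = 0
  · have hz : z = - (t • w) := eq_neg_of_add_eq_zero_left h
    have e1 : ∀ s : ℝ, z + s • w = (s - t) • w := fun s => by rw [hz, sub_smul]; abel
    have hc : Continuous (fun s : ℝ => aF f' f'' ‖(s - t) • w‖) :=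
      H.aFn_cont.comp (by fun_prop)
    have e2 : (fun s : ℝ => ⟪AE f' f'' (z + s • w), ζ⟫)
        = fun s => (aF f' f'' ‖(s - t) • w‖ * ⟪w, ζ⟫) * (s - t) := by
      funext s; rw [e1, AE, real_inner_smul_left, real_inner_smul_left]; ring
    rw [e2, h, hasDerivAt_iff_tendsto_slope]
    have : Tendsto (fun s : ℝ => aF f' f'' ‖(s - t) • w‖ * ⟪w, ζ⟫) (𝓝[≠] t)
        (𝓝 (BE f' f'' 0 w ζ)) := by
      have h3 : BE f' f'' (0:E) w ζ = aF f' f'' ‖(t - t) • w‖ * ⟪w, ζ⟫ := by simp [BE]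
      rw [h3]
      exact ((hc.mul continuous_const).tendsto t).mono_left nhdsWithin_le_nhds
    refine this.congr' ?_
    filter_upwards [self_mem_nhdsWithin] with s hs
    have : s - t ≠ 0 := sub_ne_zero.2 hs
    rw [slope_def_field]; field_simp; simp; ring
  · have hpos : 0 < ‖z + t • w‖ := norm_pos_iff.2 h
    have hn : HasDerivAt (fun s : ℝ => ‖z + s • w‖) (⟪z + t • w, w⟫ / ‖z + t • w‖) t := by
      have h1 : HasDerivAt (fun s : ℝ => ‖z + s • w‖ ^ 2) (2 * ⟪z + t • w, w⟫) t := hl.norm_sq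
      have h2 := h1.sqrt (by positivity)
      have e : (fun s : ℝ => √(‖z + s • w‖ ^ 2)) = fun s => ‖z + s • w‖ := by
        funext s; exact Real.sqrt_sq (norm_nonneg _)
      rw [e, Real.sqrt_sq (norm_nonneg _)] at h2
      convert h2 using 1
      field_simp
    have hf : HasDerivAt f' (f'' ‖z + t • w‖) ‖z + t • w‖ :=
      (H.hderiv' _ hpos.le).hasDerivAt (Ici_mem_nhds hpos)
    have h3 : HasDerivAt (fun s : ℝ => f' ‖z + s • w‖ / ‖z + s • w‖)
      ((f'' ‖z + t • w‖ * (⟪z + t • w, w⟫ / ‖z + t • w‖) * ‖z + t • w‖ -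
        f' ‖z + t • w‖ * (⟪z + t • w, w⟫ / ‖z + t • w‖)) / ‖z + t • w‖ ^ 2) t :=
      (hf.comp t hn).div hn hpos.ne'
    have h4 : HasDerivAt (fun s : ℝ => ⟪z + s • w, ζ⟫) ⟪w, ζ⟫ t := by
      simpa using hl.inner ℝ (hasDerivAt_const t ζ)
    have h5 := h3.mul h4
    have ev : (fun s : ℝ => ⟪AE f' f'' (z + s • w), ζ⟫) =ᶠ[𝓝 t]
        fun s => f' ‖z + s • w‖ / ‖z + s • w‖ * ⟪z + s • w, ζ⟫ := by
      have : ∀ᶠ s in 𝓝 t, z + s • w ≠ 0 := hl.continuousAt.eventually_ne h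
      filter_upwards [this] with s hs
      rw [AE, real_inner_smul_left, aF, if_neg (by simpa using hs)]
    refine HasDerivAt.congr_of_eventuallyEq ?_ ev
    refine h5.congr_deriv ?_
    simp only [BE, aF, if_neg hpos.ne']
    field_simp
    ring

theorem BEseg_cont (H : FHyp f f' f'' L) (z w ξ ζ : E) :
    Continuous (fun t : ℝ => BE f' f'' (z + t • w) ξ ζ) :=
  H.BE_cont.comp (f := fun t : ℝ => (z + t • w, ξ, ζ)) (by fun_prop)

theorem AE_sub (H : FHyp f f' f'' L) (z z' ζ : E) :
    ⟪AE f' f'' z' - AE f' f'' z, ζ⟫ = ∫ t in (0:ℝ)..1, BE f' f'' (z + t • (z' - z)) (z' - z) ζ := by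
  rw [intervalIntegral.integral_eq_sub_of_hasDerivAt
    (fun t _ => H.hasDerivAt_AE z (z' - z) ζ t)
    ((H.BEseg_cont _ _ _ _).intervalIntegrable _ _)]
  simp [inner_sub_left]

theorem ME_cont (H : FHyp f f' f'' L) :
    Continuous (fun p : E × E × E => ME f' f'' p.1 p.2.1 p.2.2) := by
  unfold ME
  refine intervalIntegral.continuous_parametric_intervalIntegral_of_continuous' ?_ 0 1
  exact H.BE_cont.comp (f := fun q : (E × E × E) × ℝ =>
    (q.1.1 + q.2 • (q.1.2.1 - q.1.1), q.1.2.2, q.1.2.2)) (by fun_prop)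

theorem ME_self (z ζ : E) : ME f' f'' z z ζ = BE f' f'' z ζ ζ := by simp [ME]

theorem ME_nonneg (H : FHyp f f' f'' L) (z z' ζ : E) : 0 ≤ ME f' f'' z z' ζ :=
  intervalIntegral.integral_nonneg zero_le_one (fun _ _ => (H.BE_bounds _ _).1)

theorem ME_le (H : FHyp f f' f'' L) (z z' ζ : E) : ME f' f'' z z' ζ ≤ L * ‖ζ‖ ^ 2 := by
  have := intervalIntegral.integral_mono_on (μ := volume) (a := 0) (b := 1) zero_le_one
    ((H.BEseg_cont z (z' - z) ζ ζ).intervalIntegrable 0 1) (intervalIntegrable_const (c := L * ‖ζ‖ ^ 2))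
    (fun t _ => (H.BE_bounds _ _).2.1)
  simpa [ME] using this

theorem ME_diff (H : FHyp f f' f'' L) (z z' : E) :
    ME f' f'' z z' (z' - z) = ⟪AE f' f'' z' - AE f' f'' z, z' - z⟫ := by
  rw [H.AE_sub]; rfl

theorem ME_smul (z z' ζ : E) (c : ℝ) : ME f' f'' z z' (c • ζ) = c ^ 2 * ME f' f'' z z' ζ := by
  unfold ME
  rw [← intervalIntegral.integral_const_mul]
  congr 1; funext t
  simp only [BE, real_inner_smul_left, real_inner_smul_right]; ring

theorem ME_add_le (H : FHyp f f' f'' L) (z z' ξ ζ : E) :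
    ME f' f'' z z' (ξ + ζ) ≤ 2 * ME f' f'' z z' ξ + 2 * ME f' f'' z z' ζ := by
  have h0 := H.ME_nonneg z z' (ξ - ζ)
  have e : ME f' f'' z z' (ξ + ζ) + ME f' f'' z z' (ξ - ζ)
      = 2 * ME f' f'' z z' ξ + 2 * ME f' f'' z z' ζ := by
    have I : ∀ v : E, IntervalIntegrable (fun t : ℝ => BE f' f'' (z + t • (z' - z)) v v) volume 0 1 :=
      fun v => (H.BEseg_cont z (z' - z) v v).intervalIntegrable 0 1
    unfold ME
    rw [← intervalIntegral.integral_add (I _) (I _), ← intervalIntegral.integral_const_mul,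
      ← intervalIntegral.integral_const_mul,
      ← intervalIntegral.integral_add ((I _).const_mul _) ((I _).const_mul _)]
    congr 1; funext t
    simp only [BE, inner_add_left, inner_add_right, inner_sub_left, inner_sub_right]
    ring
  linarith

/-- Young inequality -/
theorem ME_young (H : FHyp f f' f'' L) (z z' ζ : E) (α : ℝ) :
    α * ⟪AE f' f'' z' - AE f' f'' z, ζ⟫ ≤
      α ^ 2 / 2 * ⟪AE f' f'' z' - AE f' f'' z, z' - z⟫ + ME f' f'' z z' ζ / 2 := by
  have h0 := H.ME_nonneg z z' (α • (z' - z) - ζ)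
  have e : ME f' f'' z z' (α • (z' - z) - ζ) = α ^ 2 * ⟪AE f' f'' z' - AE f' f'' z, z' - z⟫
      - 2 * α * ⟪AE f' f'' z' - AE f' f'' z, ζ⟫ + ME f' f'' z z' ζ := by
    have I : ∀ v w : E, IntervalIntegrable (fun t : ℝ => BE f' f'' (z + t • (z' - z)) v w) volume 0 1 :=
      fun v w => (H.BEseg_cont z (z' - z) v w).intervalIntegrable 0 1
    rw [H.AE_sub, H.AE_sub]
    unfold ME
    rw [← intervalIntegral.integral_const_mul, ← intervalIntegral.integral_const_mul,
      ← intervalIntegral.integral_sub ((I _ _).const_mul _) ((I _ _).const_mul _),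
      ← intervalIntegral.integral_add (((I _ _).const_mul _).sub ((I _ _).const_mul _)) (I _ _)]
    congr 1; funext t
    generalize z' - z = w
    simp only [BE, inner_sub_left, inner_sub_right, real_inner_smul_left, real_inner_smul_right]
    rw [real_inner_comm w ζ]
    ring
  linarith

theorem AE_norm_le (H : FHyp f f' f'' L) (z : E) : ‖AE f' f'' z‖ ≤ L * ‖z‖ := by
  rw [AE, norm_smul, Real.norm_eq_abs, abs_of_nonneg (H.aF_nonneg (norm_nonneg _))]
  exact mul_le_mul_of_nonneg_right (H.aF_le (norm_nonneg _)) (norm_nonneg _)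

theorem AE_cont (H : FHyp f f' f'' L) : Continuous (AE f' f'' : E → E) :=
  H.aFn_cont.smul continuous_id

theorem AE_smul_self (H : FHyp f f' f'' L) (z w : E) :
    f ‖w‖ - f ‖z‖ ≤ ⟪AE f' f'' z, w - z⟫ + L * ‖w - z‖ ^ 2 := by
  have h1 : f ‖w‖ - f ‖z‖ ≤ ⟪AE f' f'' w, w - z⟫ := by
    have h := H.tangent (norm_nonneg w) (norm_nonneg z)
    have h2 : f' ‖w‖ = aF f' f'' ‖w‖ * ‖w‖ := by
      unfold aF; split_ifs with h
      · rw [h, H.hf'0]; simp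
      · rw [div_mul_cancel₀ _ h]
    have h3 : ⟪AE f' f'' w, w - z⟫ = aF f' f'' ‖w‖ * (‖w‖ ^ 2 - ⟪w, z⟫) := by
      rw [AE, real_inner_smul_left, inner_sub_right, real_inner_self_eq_norm_sq]
    have h4 := real_inner_le_norm w z
    have h5 := H.aF_nonneg (norm_nonneg w)
    rw [h3]; rw [h2] at h
    nlinarith
  have h2 := H.ME_le z w (w - z)
  rw [H.ME_diff] at h2
  rw [inner_sub_left] at h2
  linarith

end FHyp
end EE

section L2
variable {n : ℕ}

noncomputable def dq (e : EVec n) (h : ℝ) (g : EVec n → ℝ) (x : EVec n) : ℝ :=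
  (g (x + h • e) - g x) / h

/-- global weak directional derivative -/
def WD (e : EVec n) (g g' : EVec n → ℝ) : Prop :=
  ∀ φ : EVec n → ℝ, ContDiff ℝ 1 φ → HasCompactSupport φ →
    ∫ x, g x * fderiv ℝ φ x e = - ∫ x, g' x * φ x

theorem mp_shift (v : EVec n) : MeasurePreserving (fun x : EVec n => x + v) volume volume :=
  measurePreserving_add_right volume v

theorem memLp_shift {g : EVec n → ℝ} (hg : MemLp g 2 volume) (v : EVec n) :
    MemLp (fun x => g (x + v)) 2 volume :=
  hg.comp_measurePreserving (mp_shift v)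

theorem memLp_dq {g : EVec n → ℝ} (hg : MemLp g 2 volume) (e : EVec n) (h : ℝ) :
    MemLp (dq e h g) 2 volume := by
  have := ((memLp_shift hg (h • e)).sub hg).const_mul h⁻¹
  refine this.ae_eq (Eventually.of_forall fun x => ?_)
  simp [dq, div_eq_inv_mul]

theorem integral_shift (F : EVec n → ℝ) (v : EVec n) : ∫ x, F (x + v) = ∫ x, F x :=
  integral_add_right_eq_self F v

theorem integrable_mul2 {α : Type*} [MeasurableSpace α] {μ : Measure α} {F G : α → ℝ}
    (hF : MemLp F 2 μ) (hG : MemLp G 2 μ) : Integrable (fun x => F x * G x) μ :=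
  hF.integrable_mul hG

theorem memLp_test {φ : EVec n → ℝ} (h : Continuous φ) (hc : HasCompactSupport φ) :
    MemLp φ 2 (volume : Measure (EVec n)) :=
  h.memLp_of_hasCompactSupport hc

theorem inner_toLp {F G : EVec n → ℝ} (hF : MemLp F 2 volume) (hG : MemLp G 2 volume) :
    ⟪hF.toLp F, hG.toLp G⟫ = ∫ x, F x * G x := by
  rw [L2.inner_def]
  refine integral_congr_ae ?_
  filter_upwards [hF.coeFn_toLp, hG.coeFn_toLp] with x h1 h2
  rw [h1, h2]; simp [mul_comm]

theorem cs2 {F G : EVec n → ℝ} (hF : MemLp F 2 volume) (hG : MemLp G 2 volume) :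
    |∫ x, F x * G x| ≤ (eLpNorm F 2 volume).toReal * (eLpNorm G 2 volume).toReal := by
  have := abs_real_inner_le_norm (hF.toLp F) (hG.toLp G)
  rwa [inner_toLp, Lp.norm_toLp, Lp.norm_toLp] at this

theorem l2_le_of_test {F : EVec n → ℝ} (hF : MemLp F 2 volume) {ε : ℝ} (hε : 0 ≤ ε)
    (h : ∀ φ : EVec n → ℝ, ContDiff ℝ 1 φ → HasCompactSupport φ →
      |∫ x, F x * φ x| ≤ ε * (eLpNorm φ 2 volume).toReal) :
    eLpNorm F 2 volume ≤ ENNReal.ofReal ε := by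
  have key : ∀ ψ : Lp ℝ 2 (volume : Measure (EVec n)), |⟪hF.toLp F, ψ⟫| ≤ ε * ‖ψ‖ := by
    have hd := Lp.dense_hasCompactSupport_contDiff (F := ℝ) (p := 2)
      (μ := (volume : Measure (EVec n))) (by simp)
    intro ψ
    have hcl : IsClosed {ψ : Lp ℝ 2 (volume : Measure (EVec n)) | |⟪hF.toLp F, ψ⟫| ≤ ε * ‖ψ‖} :=
      isClosed_le (by fun_prop) (by fun_prop)
    refine hcl.closure_subset_iff.2 ?_ (hd ψ)
    rintro p ⟨g, hpg, hg1, hg2⟩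
    have hgm := memLp_test hg2.continuous hg1
    have hp : p = hgm.toLp g := by
      refine Lp.ext ?_
      exact hpg.trans hgm.coeFn_toLp.symm
    have := h g (hg2.of_le (by exact_mod_cast le_top)) hg1
    rw [mem_ofPred_eq, hp, inner_toLp, Lp.norm_toLp]
    exact this
  have h1 := key (hF.toLp F)
  rw [real_inner_self_eq_norm_sq, abs_of_nonneg (sq_nonneg _)] at h1
  have h2 : ‖hF.toLp F‖ ≤ ε := by
    by_contra hc
    push Not at hc
    nlinarith [norm_nonneg (hF.toLp F)]
  rw [Lp.norm_toLp] at h2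
  exact (ENNReal.le_ofReal_iff_toReal_le hF.eLpNorm_ne_top hε).2 h2

theorem shift_tendsto {g : EVec n → ℝ} (hg : MemLp g 2 volume) (e : EVec n) :
    Tendsto (fun h : ℝ => eLpNorm (fun x => g (x + h • e) - g x) 2 volume) (𝓝 0) (𝓝 0) := by
  let G : C(ℝ, C(EVec n, EVec n)) :=
    (ContinuousMap.mk (fun a : ℝ × EVec n ↦ a.2 + a.1 • e) (by fun_prop)).curry
  have hmp : ∀ h : ℝ, MeasurePreserving (G h) (volume : Measure (EVec n)) volume :=
    fun h => mp_shift (h • e)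
  have hT := Filter.Tendsto.compMeasurePreservingLp (p := 2) (l := 𝓝 (0:ℝ))
    (tendsto_const_nhds (x := hg.toLp g)) (G.continuous.tendsto 0) hmp (hmp 0) (by simp)
  rw [tendsto_iff_edist_tendsto_0] at hT
  refine hT.congr fun h => ?_
  rw [Lp.edist_def]
  refine eLpNorm_congr_ae ?_
  have h1 : ∀ h, Lp.compMeasurePreserving (G h) (hmp h) (hg.toLp g)
      =ᵐ[volume] fun x => g (x + h • e) := fun h =>
    (Lp.coeFn_compMeasurePreserving _ (hmp h)).trans
      ((hmp h).quasiMeasurePreserving.ae_eq_comp hg.coeFn_toLp)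
  filter_upwards [h1 h, h1 0] with x hx hx0
  simp only [Pi.sub_apply]
  rw [hx, hx0]; simp

theorem hasDerivAt_pair {g φ : EVec n → ℝ} (hg : LocallyIntegrable g volume)
    (hφ : ContDiff ℝ 1 φ) (hc : HasCompactSupport φ) (e : EVec n) (t₀ : ℝ) :
    HasDerivAt (fun t : ℝ => ∫ x, g x * φ (x - t • e))
      (∫ x, g x * (- fderiv ℝ φ (x - t₀ • e) e)) t₀ := by
  have hfc : Continuous (fderiv ℝ φ) := hφ.continuous_fderiv one_ne_zero
  obtain ⟨C, hC⟩ := (hc.fderiv ℝ).exists_bound_of_continuous hfc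
  have hK : IsCompact ((fun p : EVec n × ℝ => p.1 + p.2 • e) '' (tsupport φ ×ˢ Icc (t₀ - 1) (t₀ + 1))) :=
    (hc.isCompact.prod isCompact_Icc).image (by fun_prop)
  set K := ((fun p : EVec n × ℝ => p.1 + p.2 • e) '' (tsupport φ ×ˢ Icc (t₀ - 1) (t₀ + 1))) with hKd
  have hgm : AEStronglyMeasurable g volume := hg.aestronglyMeasurable
  refine (hasDerivAt_integral_of_dominated_loc_of_deriv_le (F := fun t x => g x * φ (x - t • e))
    (F' := fun t x => g x * (- fderiv ℝ φ (x - t • e) e))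
    (bound := K.indicator fun x => ‖g x‖ * (C * ‖e‖)) (Metric.ball_mem_nhds t₀ one_pos) ?_ ?_ ?_ ?_ ?_ ?_).2
  · refine Eventually.of_forall fun t => hgm.mul ?_
    exact (hφ.continuous.comp (by fun_prop)).aestronglyMeasurable
  · have := hg.integrable_smul_left_of_hasCompactSupport (f := g) (g := fun x => φ (x - t₀ • e))
      (hφ.continuous.comp (by fun_prop)) (by
        have := hc.comp_homeomorph (Homeomorph.addRight (-(t₀ • e)))
        simp only [sub_eq_add_neg]
        exact this)
    refine this.congr (Eventually.of_forall fun x => by simp [mul_comm])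
  · refine hgm.mul ?_
    have : Continuous fun x => - fderiv ℝ φ (x - t₀ • e) e :=
      ((hfc.comp (by fun_prop : Continuous fun x : EVec n => x - t₀ • e)).clm_apply continuous_const).neg
    exact this.aestronglyMeasurable
  · refine Eventually.of_forall fun x t ht => ?_
    by_cases hx : x ∈ K
    · rw [indicator_of_mem hx, norm_mul, norm_neg]
      refine mul_le_mul_of_nonneg_left ?_ (norm_nonneg _)
      exact (ContinuousLinearMap.le_opNorm _ _).trans
        (mul_le_mul_of_nonneg_right (hC _) (norm_nonneg _))
    · rw [indicator_of_notMem hx]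
      have : x - t • e ∉ tsupport φ := by
        intro hmem
        apply hx
        refine ⟨(x - t • e, t), ⟨hmem, ?_⟩, by simp⟩
        rw [Metric.mem_ball, Real.dist_eq, abs_lt] at ht
        constructor <;> simp <;> linarith [ht.1, ht.2]
      have h0 : fderiv ℝ φ (x - t • e) = 0 := by
        by_contra hne
        exact this (support_fderiv_subset ℝ hne)
      simp [h0]
  · rw [integrable_indicator_iff hK.measurableSet]
    exact ((hg.integrableOn_isCompact hK).norm.mul_const _)
  · refine Eventually.of_forall fun x t ht => ?_
    have h1 : HasDerivAt (fun t : ℝ => x - t • e) (-e) t := by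
      simpa using ((hasDerivAt_id t).smul_const e).const_sub x
    have h2 := (hφ.differentiable one_ne_zero (x - t • e)).hasFDerivAt.comp_hasDerivAt t h1
    have h3 := h2.const_mul (g x)
    simpa using h3

theorem test_shift {φ : EVec n → ℝ} (hφ : ContDiff ℝ 1 φ) (hc : HasCompactSupport φ) (v : EVec n) :
    ContDiff ℝ 1 (fun x => φ (x + v)) ∧ HasCompactSupport (fun x => φ (x + v)) ∧
      ∀ x w, fderiv ℝ (fun x => φ (x + v)) x w = fderiv ℝ φ (x + v) w := by
  refine ⟨hφ.comp (by fun_prop), hc.comp_homeomorph (Homeomorph.addRight v), fun x w => ?_⟩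
  rw [fderiv_comp_add_right]

theorem dq_tendsto {g g' : EVec n → ℝ} {e : EVec n} (hg : MemLp g 2 volume)
    (hg' : MemLp g' 2 volume) (hW : WD e g g') :
    Tendsto (fun h : ℝ => eLpNorm (fun x => dq e h g x - g' x) 2 volume) (𝓝[≠] 0) (𝓝 0) := by
  rw [ENNReal.tendsto_nhds_zero]
  intro ε' hε'
  obtain ⟨ε, hε, hεε⟩ : ∃ ε : ℝ, 0 < ε ∧ ENNReal.ofReal ε ≤ ε' := by
    rcases eq_or_ne ε' ⊤ with h | h
    · exact ⟨1, one_pos, by simp [h]⟩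
    · exact ⟨ε'.toReal, ENNReal.toReal_pos hε'.ne' h, by rw [ENNReal.ofReal_toReal h]⟩
  have hS := (ENNReal.tendsto_nhds_zero.1 (shift_tendsto hg' e)) (ENNReal.ofReal ε) (by simpa using hε)
  obtain ⟨δ, hδ, hball⟩ := Metric.eventually_nhds_iff_ball.1 hS
  have hev : ∀ᶠ h : ℝ in 𝓝[≠] 0, h ∈ Metric.ball (0:ℝ) δ :=
    mem_nhdsWithin_of_mem_nhds (Metric.ball_mem_nhds 0 hδ)
  filter_upwards [hev, self_mem_nhdsWithin] with h hh hne
  have hne : h ≠ 0 := hne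
  refine le_trans ?_ hεε
  refine l2_le_of_test ((memLp_dq hg e h).sub hg') hε.le ?_
  intro φ hφ hc
  have hφm := memLp_test hφ.continuous hc
  have hgl : LocallyIntegrable g volume := hg.locallyIntegrable (by norm_num)
  set c := ∫ x, g' x * φ x with hcdef
  have hder : ∀ t : ℝ, HasDerivAt (fun t : ℝ => (∫ x, g x * φ (x - t • e)) - t * c)
      ((∫ x, (g' (x + t • e) - g' x) * φ x)) t := by
    intro t
    have h1 := (hasDerivAt_pair hgl hφ hc e t).sub ((hasDerivAt_id t).mul_const c)
    refine h1.congr_deriv ?_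
    obtain ⟨ha, hb, hd⟩ := test_shift hφ hc (-(t • e))
    have h2 := hW _ ha hb
    simp only [hd] at h2
    have h3 : ∫ x, g x * (- fderiv ℝ φ (x - t • e) e) = ∫ x, g' x * φ (x - t • e) := by
      simp only [mul_neg, integral_neg, sub_eq_add_neg, h2, neg_neg]
    have h4 : ∫ x, g' x * φ (x - t • e) = ∫ x, g' (x + t • e) * φ x := by
      rw [← integral_shift _ (t • e)]; simp
    rw [h3, h4, hcdef, one_mul, ← integral_sub (integrable_mul2 (memLp_shift hg' _) hφm)
      (integrable_mul2 hg' hφm)]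
    congr 1; funext x; ring
  have hmv := (convex_ball (0:ℝ) δ).norm_image_sub_le_of_norm_hasDerivWithin_le
    (C := ε * (eLpNorm φ 2 volume).toReal)
    (fun t _ => (hder t).hasDerivWithinAt) (fun t ht => by
      rw [Real.norm_eq_abs]
      refine (cs2 ((memLp_shift hg' _).sub hg') hφm).trans ?_
      refine mul_le_mul_of_nonneg_right ?_ ENNReal.toReal_nonneg
      exact ENNReal.toReal_le_of_le_ofReal hε.le (hball t ht)) (Metric.mem_ball_self hδ) hh
  have e1 : ∫ x, g x * φ (x - h • e) = ∫ x, g (x + h • e) * φ x := by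
    rw [← integral_shift _ (h • e)]; simp
  have e2 : ∫ x, (dq e h g x - g' x) * φ x
      = ((∫ x, g x * φ (x - h • e)) - h * c - ((∫ x, g x * φ (x - (0:ℝ) • e)) - 0 * c)) / h := by
    have : (fun x => (dq e h g x - g' x) * φ x)
        = fun x => (g (x + h • e) * φ x - g x * φ x) * h⁻¹ - g' x * φ x := by
      funext x; simp only [dq]; ring
    have hI : Integrable (fun x => (g (x + h • e) * φ x - g x * φ x) * h⁻¹) volume :=
      ((integrable_mul2 (memLp_shift hg _) hφm).sub (integrable_mul2 hg hφm)).mul_const _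
    rw [this, integral_sub hI (integrable_mul2 hg' hφm), integral_mul_const,
      integral_sub (integrable_mul2 (memLp_shift hg _) hφm) (integrable_mul2 hg hφm), e1]
    simp only [zero_smul, sub_zero, zero_mul]
    field_simp
    ring
  simp only [Pi.sub_apply]
  rw [e2, abs_div, div_le_iff₀ (abs_pos.2 hne)]
  simpa using hmv

theorem dq_pair {g φ : EVec n → ℝ} (hg : MemLp g 2 volume) (hφ : MemLp φ 2 volume) (e : EVec n) (h : ℝ) :
    ∫ x, dq e h g x * φ x = - ∫ x, g x * dq e (-h) φ x := by
  have h1 : (fun x => dq e h g x * φ x) = fun x => (g (x + h • e) * φ x - g x * φ x) * h⁻¹ := by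
    funext x; simp only [dq]; ring
  have h2 : (fun x => g x * dq e (-h) φ x) =
      fun x => -((g x * φ (x - h • e) - g x * φ x) * h⁻¹) := by
    funext x; simp only [dq, neg_smul, div_neg, sub_eq_add_neg]; ring
  have h3 : MemLp (fun x => φ (x - h • e)) 2 volume := by
    simpa [sub_eq_add_neg] using memLp_shift hφ (-(h • e))
  have e1 : ∫ x, g x * φ (x - h • e) = ∫ x, g (x + h • e) * φ x := by
    rw [← integral_shift _ (h • e)]; simp
  rw [h1, h2, integral_neg, neg_neg, integral_mul_const, integral_mul_const,
    integral_sub (integrable_mul2 (memLp_shift hg _) hφ) (integrable_mul2 hg hφ),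
    integral_sub (integrable_mul2 hg h3) (integrable_mul2 hg hφ), e1]

theorem exists_WD {g : EVec n → ℝ} {e : EVec n} (hg : MemLp g 2 volume) {C : ℝ}
    (hb : ∀ᶠ h : ℝ in 𝓝[≠] 0, eLpNorm (dq e h g) 2 volume ≤ ENNReal.ofReal C) :
    ∃ g', MemLp g' 2 volume ∧ WD e g g' := by
  let H := Lp ℝ 2 (volume : Measure (EVec n))
  let 𝒰 : Ultrafilter ℝ := Ultrafilter.of (𝓝[≠] (0:ℝ))
  have hU : (𝒰 : Filter ℝ) ≤ 𝓝[≠] 0 := Ultrafilter.of_le _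
  let D : ℝ → H := fun h => (memLp_dq hg e h).toLp (dq e h g)
  let ℓ : ℝ → WeakDual ℝ H := fun h => StrongDual.toWeakDual (InnerProductSpace.toDual ℝ H (D h))
  have hcomp := WeakDual.isCompact_closedBall (𝕜 := ℝ) (0 : StrongDual ℝ H) (max C 0)
  have hmem : ∀ᶠ h in (𝒰 : Filter ℝ), ℓ h ∈ WeakDual.toStrongDual ⁻¹'
      Metric.closedBall (0 : StrongDual ℝ H) (max C 0) := by
    filter_upwards [hU hb] with h hh
    simp only [ℓ, mem_preimage, mem_closedBall_zero_iff]
    change ‖InnerProductSpace.toDual ℝ H (D h)‖ ≤ _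
    rw [LinearIsometryEquiv.norm_map]
    simp only [D]
    rw [Lp.norm_toLp]
    refine ENNReal.toReal_le_of_le_ofReal (le_max_right _ _) (hh.trans ?_)
    exact ENNReal.ofReal_le_ofReal (le_max_left _ _)
  obtain ⟨l, -, hl⟩ := hcomp.ultrafilter_le_nhds (𝒰.map ℓ) (by
    rw [le_principal_iff]; exact hmem)
  let G : H := (InnerProductSpace.toDual ℝ H).symm (WeakDual.toStrongDual l)
  refine ⟨G, Lp.memLp G, ?_⟩
  intro φ hφ hc
  have hφm := memLp_test hφ.continuous hc
  have t1 : Tendsto (fun h => ∫ x, dq e h g x * φ x) 𝒰 (𝓝 (∫ x, G x * φ x)) := by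
    have h1 : Tendsto (fun h => ℓ h (hφm.toLp φ)) 𝒰 (𝓝 (l (hφm.toLp φ))) :=
      ((WeakDual.eval_continuous (hφm.toLp φ)).tendsto l).comp hl
    have h2 : l (hφm.toLp φ) = ∫ x, G x * φ x := by
      have : l (hφm.toLp φ) = ⟪G, hφm.toLp φ⟫ := by
        simp only [G, InnerProductSpace.toDual_symm_apply]; rfl
      rw [this]
      have h3 : G = (Lp.memLp G).toLp G := by simp
      conv_lhs => rw [h3]
      exact inner_toLp _ _
    rw [← h2]
    refine h1.congr fun h => ?_
    change ⟪D h, hφm.toLp φ⟫ = _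
    exact inner_toLp _ _
  have t2 : Tendsto (fun h => ∫ x, dq e h g x * φ x) (𝓝[≠] 0)
      (𝓝 (- ∫ x, g x * fderiv ℝ φ x e)) := by
    have hd := hasDerivAt_pair (hg.locallyIntegrable (by norm_num)) hφ hc e 0
    rw [hasDerivAt_iff_tendsto_slope] at hd
    simp only [zero_smul, sub_zero, mul_neg, integral_neg] at hd
    refine hd.congr' ?_
    filter_upwards [self_mem_nhdsWithin] with h hne
    have h3 : MemLp (fun x => φ (x - h • e)) 2 volume := by
      simpa [sub_eq_add_neg] using memLp_shift hφm (-(h • e))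
    rw [dq_pair hg hφm, slope_def_field, zero_smul, sub_zero]
    simp only [sub_zero]
    rw [← integral_sub (integrable_mul2 hg h3) (integrable_mul2 hg hφm), ← integral_div,
      ← integral_neg]
    congr 1; funext x; simp only [dq, neg_smul, div_neg, sub_eq_add_neg]; ring
  have := tendsto_nhds_unique t1 (t2.mono_left hU)
  rw [this, neg_neg]

end L2

section Bridge
variable {N n : ℕ}

/-- matrices as a Euclidean space -/
noncomputable def toE (z : Fin N → Fin n → ℝ) : EuclideanSpace ℝ (Fin N × Fin n) :=
  WithLp.toLp 2 (fun p => z p.1 p.2)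

theorem toE_inner (z w : Fin N → Fin n → ℝ) : ⟪toE z, toE w⟫ = mdot z w := by
  simp [toE, mdot, PiLp.inner_apply, Fintype.sum_prod_type, mul_comm]

theorem toE_norm_sq (z : Fin N → Fin n → ℝ) : ‖toE z‖ ^ 2 = mdot z z := by
  rw [← real_inner_self_eq_norm_sq, toE_inner]

theorem toE_norm (z : Fin N → Fin n → ℝ) : ‖toE z‖ = mnorm z := by
  rw [mnorm, ← toE_norm_sq, Real.sqrt_sq (norm_nonneg _)]

theorem mnorm_sq (z : Fin N → Fin n → ℝ) : mnorm z ^ 2 = mdot z z := by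
  rw [← toE_norm, toE_norm_sq]

theorem mnorm_nonneg (z : Fin N → Fin n → ℝ) : 0 ≤ mnorm z := Real.sqrt_nonneg _

theorem toE_add (z w : Fin N → Fin n → ℝ) : toE (z + w) = toE z + toE w := rfl
theorem toE_sub (z w : Fin N → Fin n → ℝ) : toE (z - w) = toE z - toE w := rfl
theorem toE_smul (c : ℝ) (z : Fin N → Fin n → ℝ) : toE (c • z) = c • toE z := rfl

theorem toE_cont : Continuous (toE : (Fin N → Fin n → ℝ) → _) := by
  unfold toE; fun_prop

theorem mdot_le (z w : Fin N → Fin n → ℝ) : |mdot z w| ≤ mnorm z * mnorm w := by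
  rw [← toE_inner, ← toE_norm, ← toE_norm]; exact abs_real_inner_le_norm _ _

theorem mnorm_cont : Continuous (mnorm : (Fin N → Fin n → ℝ) → ℝ) := by
  have : (mnorm : (Fin N → Fin n → ℝ) → ℝ) = fun z => ‖toE z‖ := by funext z; rw [toE_norm]
  rw [this]; exact toE_cont.norm

theorem comp_le_mnorm (z : Fin N → Fin n → ℝ) (a : Fin N) (i : Fin n) : |z a i| ≤ mnorm z := by
  rw [mnorm]
  refine Real.abs_le_sqrt ?_
  have h1 : z a i * z a i ≤ ∑ j, z a j * z a j :=
    Finset.single_le_sum (f := fun j => z a j * z a j) (fun j _ => mul_self_nonneg _) (Finset.mem_univ i)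
  have h2 : ∑ j, z a j * z a j ≤ ∑ b, ∑ j, z b j * z b j :=
    Finset.single_le_sum (f := fun b => ∑ j, z b j * z b j)
      (fun b _ => Finset.sum_nonneg fun j _ => mul_self_nonneg _) (Finset.mem_univ a)
  rw [sq]; exact h1.trans h2

theorem mdot_add_right (z w v : Fin N → Fin n → ℝ) : mdot z (w + v) = mdot z w + mdot z v := by
  rw [← toE_inner, toE_add, inner_add_right, toE_inner, toE_inner]
theorem mdot_add_left (z w v : Fin N → Fin n → ℝ) : mdot (z + w) v = mdot z v + mdot w v := by
  rw [← toE_inner, toE_add, inner_add_left, toE_inner, toE_inner]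
theorem mdot_sub_left (z w v : Fin N → Fin n → ℝ) : mdot (z - w) v = mdot z v - mdot w v := by
  rw [← toE_inner, toE_sub, inner_sub_left, toE_inner, toE_inner]
theorem mdot_smul_right (z w : Fin N → Fin n → ℝ) (c : ℝ) : mdot z (c • w) = c * mdot z w := by
  rw [← toE_inner, toE_smul, real_inner_smul_right, toE_inner]
theorem mdot_smul_left (z w : Fin N → Fin n → ℝ) (c : ℝ) : mdot (c • z) w = c * mdot z w := by
  rw [← toE_inner, toE_smul, real_inner_smul_left, toE_inner]
theorem mdot_comm (z w : Fin N → Fin n → ℝ) : mdot z w = mdot w z := by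
  rw [← toE_inner, real_inner_comm, toE_inner]

theorem Amap_eq (f' f'' : ℝ → ℝ) (z : Fin N → Fin n → ℝ) :
    toE (Amap f' z) = AE f' f'' (toE z) := by
  have : Amap f' z = (f' (mnorm z) / mnorm z) • z := rfl
  rw [this, toE_smul, AE, aF, toE_norm]
  split_ifs with h
  · have hz : toE z = 0 := by rw [← norm_eq_zero, toE_norm, h]
    rw [hz]; simp
  · rfl

theorem QA_eq (f' f'' : ℝ → ℝ) (z ζ : Fin N → Fin n → ℝ) :
    QA f' f'' z ζ = BE f' f'' (toE z) (toE ζ) (toE ζ) := by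
  unfold QA BE aF
  rw [toE_norm, real_inner_self_eq_norm_sq, toE_inner, toE_norm]
  split_ifs with h
  · rw [h]; simp
  · field_simp
    ring

noncomputable def Mr (f' f'' : ℝ → ℝ) (z z' ζ : Fin N → Fin n → ℝ) : ℝ :=
  ME f' f'' (toE z) (toE z') (toE ζ)

namespace FHyp
variable {f f' f'' : ℝ → ℝ} {L : ℝ}

theorem Amap_cont (H : FHyp f f' f'' L) : Continuous (Amap f' : (Fin N → Fin n → ℝ) → _) := by
  have h : Continuous (fun z : Fin N → Fin n → ℝ => AE f' f'' (toE z)) := H.AE_cont.comp toE_cont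
  refine continuous_pi fun a => continuous_pi fun i => ?_
  have h2 : (fun z : Fin N → Fin n → ℝ => Amap f' z a i) = fun z => (AE f' f'' (toE z)) (a, i) := by
    funext z; rw [← Amap_eq]; rfl
  rw [h2]
  fun_prop

theorem Amap_le (H : FHyp f f' f'' L) (z : Fin N → Fin n → ℝ) : mnorm (Amap f' z) ≤ L * mnorm z := by
  rw [← toE_norm, ← toE_norm, Amap_eq f' f'']; exact H.AE_norm_le _

theorem f_taylor (H : FHyp f f' f'' L) (z w : Fin N → Fin n → ℝ) (ε : ℝ) :
    f (mnorm (z + ε • w)) - f (mnorm z) ≤ ε * mdot (Amap f' z) w + L * ε ^ 2 * mnorm w ^ 2 := by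
  have := H.AE_smul_self (toE z) (toE (z + ε • w))
  rw [toE_add, toE_smul, add_sub_cancel_left, norm_smul, mul_pow, Real.norm_eq_abs, sq_abs,
    real_inner_smul_right, ← Amap_eq, toE_inner, ← toE_smul, ← toE_add] at this
  simp only [toE_norm] at this
  linarith

theorem Mr_cont (H : FHyp f f' f'' L) :
    Continuous (fun p : (Fin N → Fin n → ℝ) × (Fin N → Fin n → ℝ) × (Fin N → Fin n → ℝ) =>
      Mr f' f'' p.1 p.2.1 p.2.2) :=
  H.ME_cont.comp (f := fun p : (Fin N → Fin n → ℝ) × (Fin N → Fin n → ℝ) × (Fin N → Fin n → ℝ) =>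
    (toE p.1, toE p.2.1, toE p.2.2))
    ((toE_cont.comp continuous_fst).prodMk
      ((toE_cont.comp (continuous_fst.comp continuous_snd)).prodMk
        (toE_cont.comp (continuous_snd.comp continuous_snd))))

theorem Mr_self (z ζ : Fin N → Fin n → ℝ) : Mr f' f'' z z ζ = QA f' f'' z ζ := by
  rw [Mr, ME_self, QA_eq]

theorem Mr_nonneg (H : FHyp f f' f'' L) (z z' ζ : Fin N → Fin n → ℝ) : 0 ≤ Mr f' f'' z z' ζ :=
  H.ME_nonneg _ _ _

theorem Mr_le (H : FHyp f f' f'' L) (z z' ζ : Fin N → Fin n → ℝ) :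
    Mr f' f'' z z' ζ ≤ L * mnorm ζ ^ 2 := by
  rw [← toE_norm]; exact H.ME_le _ _ _

theorem QA_le (H : FHyp f f' f'' L) (z ζ : Fin N → Fin n → ℝ) :
    QA f' f'' z ζ * (1 + mnorm z) ≤ 4 * L * mnorm ζ ^ 2 := by
  rw [← toE_norm, ← toE_norm, QA_eq]; exact (H.BE_bounds _ _).2.2

theorem Mr_diff (z z' : Fin N → Fin n → ℝ) (H : FHyp f f' f'' L) (c : ℝ) :
    Mr f' f'' z z' (c • (z' - z)) = c ^ 2 * mdot (Amap f' z' - Amap f' z) (z' - z) := by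
  rw [Mr, toE_smul, ME_smul, toE_sub, H.ME_diff, ← toE_sub, ← Amap_eq, ← Amap_eq, ← toE_sub, toE_inner]

theorem Mr_add_le (H : FHyp f f' f'' L) (z z' ξ ζ : Fin N → Fin n → ℝ) :
    Mr f' f'' z z' (ξ + ζ) ≤ 2 * Mr f' f'' z z' ξ + 2 * Mr f' f'' z z' ζ := by
  unfold Mr; rw [toE_add]; exact H.ME_add_le _ _ _ _

theorem Mr_young (H : FHyp f f' f'' L) (z z' ζ : Fin N → Fin n → ℝ) (α : ℝ) :
    α * mdot (Amap f' z' - Amap f' z) ζ ≤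
      α ^ 2 / 2 * mdot (Amap f' z' - Amap f' z) (z' - z) + Mr f' f'' z z' ζ / 2 := by
  have := H.ME_young (toE z) (toE z') (toE ζ) α
  unfold Mr
  simpa only [← Amap_eq, ← toE_sub, toE_inner] using this

end FHyp
end Bridge

section L2F
variable {N n : ℕ} {α : Type*} [MeasurableSpace α] {μ : Measure α}

/-- square integrable matrix fields -/
def L2F (μ : Measure α) (Z : α → Fin N → Fin n → ℝ) : Prop := ∀ a i, MemLp (fun x => Z x a i) 2 μ

theorem L2F.aesm {Z : α → Fin N → Fin n → ℝ} (h : L2F μ Z) : AEStronglyMeasurable Z μ := by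
  refine AEMeasurable.aestronglyMeasurable ?_
  refine aemeasurable_pi_lambda _ fun a => aemeasurable_pi_lambda _ fun i => ?_
  exact (h a i).aestronglyMeasurable.aemeasurable

theorem L2F.mdot {Z W : α → Fin N → Fin n → ℝ} (h : L2F μ Z) (h' : L2F μ W) :
    Integrable (fun x => mdot (Z x) (W x)) μ := by
  unfold _root_.mdot
  exact integrable_finsetSum _ fun a _ => integrable_finsetSum _ fun i _ => integrable_mul2 (h a i) (h' a i)

theorem L2F.sq {Z : α → Fin N → Fin n → ℝ} (h : L2F μ Z) : Integrable (fun x => mnorm (Z x) ^ 2) μ := by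
  simp only [mnorm_sq]; exact h.mdot h

theorem L2F.mnorm {Z : α → Fin N → Fin n → ℝ} (h : L2F μ Z) : MemLp (fun x => mnorm (Z x)) 2 μ :=
  (memLp_two_iff_integrable_sq (mnorm_cont.comp_aestronglyMeasurable h.aesm)).2 h.sq

theorem L2F.of_sq {Z : α → Fin N → Fin n → ℝ} (h : AEStronglyMeasurable Z μ)
    (h2 : Integrable (fun x => _root_.mnorm (Z x) ^ 2) μ) : L2F μ Z := by
  intro a i
  have hm : AEStronglyMeasurable (fun x => Z x a i) μ :=
    (by fun_prop : Continuous fun z : Fin N → Fin n → ℝ => z a i).comp_aestronglyMeasurable h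
  rw [memLp_two_iff_integrable_sq hm]
  refine h2.mono' (hm.pow 2) (Eventually.of_forall fun x => ?_)
  rw [Real.norm_eq_abs, abs_pow]
  exact pow_le_pow_left₀ (abs_nonneg _) (comp_le_mnorm _ _ _) 2

theorem L2F.of_le {Z W : α → Fin N → Fin n → ℝ} (h : L2F μ Z) (hW : AEStronglyMeasurable W μ) (C : ℝ)
    (hle : ∀ x, _root_.mnorm (W x) ≤ C * _root_.mnorm (Z x)) : L2F μ W := by
  refine L2F.of_sq hW ((h.sq.const_mul (C ^ 2)).mono'
    ((mnorm_cont.comp_aestronglyMeasurable hW).pow 2) (Eventually.of_forall fun x => ?_))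
  rw [Real.norm_eq_abs, abs_of_nonneg (sq_nonneg _), ← mul_pow]
  exact pow_le_pow_left₀ (mnorm_nonneg _) (hle x) 2

theorem L2F.add {Z W : α → Fin N → Fin n → ℝ} (h : L2F μ Z) (h' : L2F μ W) :
    L2F μ (fun x => Z x + W x) := fun a i => (h a i).add (h' a i)
theorem L2F.sub {Z W : α → Fin N → Fin n → ℝ} (h : L2F μ Z) (h' : L2F μ W) :
    L2F μ (fun x => Z x - W x) := fun a i => (h a i).sub (h' a i)
theorem L2F.smul {Z : α → Fin N → Fin n → ℝ} (h : L2F μ Z) (c : ℝ) :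
    L2F μ (fun x => c • Z x) := fun a i => (h a i).const_mul c

theorem L2F.amap {f f' f'' : ℝ → ℝ} {L : ℝ} (H : FHyp f f' f'' L) {Z : α → Fin N → Fin n → ℝ}
    (h : L2F μ Z) : L2F μ (fun x => Amap f' (Z x)) :=
  h.of_le (H.Amap_cont.comp_aestronglyMeasurable h.aesm) L (fun _ => H.Amap_le _)

theorem L2F.f {f f' f'' : ℝ → ℝ} {L : ℝ} (H : FHyp f f' f'' L) [IsFiniteMeasure μ]
    {Z : α → Fin N → Fin n → ℝ} (h : L2F μ Z) : Integrable (fun x => f (_root_.mnorm (Z x))) μ := by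
  have hc : Continuous (fun z : Fin N → Fin n → ℝ => f (_root_.mnorm z)) :=
    H.f_cont.comp_continuous mnorm_cont (fun z => mnorm_nonneg z)
  have hi : Integrable (fun x => _root_.mnorm (Z x)) μ := h.mnorm.integrable (by norm_num)
  refine ((hi.add (integrable_const 1)).const_mul L).mono' (hc.comp_aestronglyMeasurable h.aesm)
    (Eventually.of_forall fun x => ?_)
  rw [Real.norm_eq_abs, abs_of_nonneg (H.f_nonneg (mnorm_nonneg _))]
  exact H.hgrowth _ (mnorm_nonneg _)

end L2F

section EL
variable {N n : ℕ} {Ω : Set (EVec n)} {f f' f'' : ℝ → ℝ} {L : ℝ}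

theorem MemW12.l2 {u : EVec n → Fin N → ℝ} {Du : EVec n → Fin N → Fin n → ℝ} (h : MemW12 Ω u Du) :
    L2F (volume.restrict Ω) Du := L2F.of_sq h.1.2.1.aestronglyMeasurable h.2.2

theorem MemW12.l2u {u : EVec n → Fin N → ℝ} {Du : EVec n → Fin N → Fin n → ℝ} (h : MemW12 Ω u Du)
    (a : Fin N) : MemLp (fun x => u x a) 2 (volume.restrict Ω) := by
  have hm : AEStronglyMeasurable (fun x => u x a) (volume.restrict Ω) :=
    (by fun_prop : Continuous fun z : Fin N → ℝ => z a).comp_aestronglyMeasurable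
      h.1.1.aestronglyMeasurable
  rw [memLp_two_iff_integrable_sq hm]
  refine h.2.1.mono' (hm.pow 2) (Eventually.of_forall fun x => ?_)
  rw [Real.norm_eq_abs, abs_of_nonneg (sq_nonneg _), vnorm,
    Real.sq_sqrt (Finset.sum_nonneg fun _ _ => sq_nonneg _)]
  exact Finset.single_le_sum (f := fun b => u x b ^ 2) (fun b _ => sq_nonneg _) (Finset.mem_univ a)

theorem vnorm_sq {ι : Type*} [Fintype ι] (v : ι → ℝ) : vnorm v ^ 2 = ∑ a, v a ^ 2 :=
  Real.sq_sqrt (Finset.sum_nonneg fun _ _ => sq_nonneg _)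

theorem MemW12.of_l2 [IsFiniteMeasure (volume.restrict Ω)]
    {u : EVec n → Fin N → ℝ} {Du : EVec n → Fin N → Fin n → ℝ}
    (hu : ∀ a, MemLp (fun x => u x a) 2 (volume.restrict Ω)) (hD : L2F (volume.restrict Ω) Du)
    (h : ∀ φ : EVec n → ℝ, ContDiff ℝ 1 φ → HasCompactSupport φ → tsupport φ ⊆ Ω →
      ∀ (a : Fin N) (i : Fin n),
      ∫ x in Ω, u x a * fderiv ℝ φ x (EuclideanSpace.single i 1) =
        - ∫ x in Ω, Du x a i * φ x) : MemW12 Ω u Du := by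
  refine ⟨⟨?_, ?_, h⟩, ?_, hD.sq⟩
  · exact Integrable.of_eval fun a => (hu a).integrable (by norm_num)
  · exact Integrable.of_eval fun a => Integrable.of_eval fun i => (hD a i).integrable (by norm_num)
  · simp only [vnorm_sq]
    exact integrable_finsetSum _ fun a _ => (hu a).integrable_sq

theorem FFk_eq (H : FHyp f f' f'' L) [IsFiniteMeasure (volume.restrict Ω)]
    {T₀ : EVec n → Fin N → Fin n → ℝ} (hT : L2F (volume.restrict Ω) T₀) (k : ℕ)
    {Z : EVec n → Fin N → Fin n → ℝ} (h : L2F (volume.restrict Ω) Z) :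
    FFk Ω f T₀ k Z = ∫ x in Ω, ((f (mnorm (Z x)) - mdot (T₀ x) (Z x)) + (2 * (k : ℝ))⁻¹ * mnorm (Z x) ^ 2)
    ∧ Integrable (fun x => (f (mnorm (Z x)) - mdot (T₀ x) (Z x)) + (2 * (k : ℝ))⁻¹ * mnorm (Z x) ^ 2)
      (volume.restrict Ω) := by
  have h1 : Integrable (fun x => f (mnorm (Z x)) - mdot (T₀ x) (Z x)) (volume.restrict Ω) :=
    (h.f H).sub (hT.mdot h)
  have h2 := h.sq.const_mul (2 * (k : ℝ))⁻¹
  refine ⟨?_, h1.add h2⟩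
  rw [FFk, FF, integral_add h1 h2, integral_const_mul]

/-- Euler-Lagrange equation -/
theorem euler_lagrange (H : FHyp f f' f'' L) [IsFiniteMeasure (volume.restrict Ω)]
    {T₀ : EVec n → Fin N → Fin n → ℝ} (hT : L2F (volume.restrict Ω) T₀) (k : ℕ) (hk : 0 < k)
    {u : EVec n → Fin N → ℝ} {Du : EVec n → Fin N → Fin n → ℝ} (hu : MemW12 Ω u Du)
    (hmin : ∀ (w : EVec n → Fin N → ℝ) (Dw : EVec n → Fin N → Fin n → ℝ),
        MemW12 Ω w Dw → FFk Ω f T₀ k Du ≤ FFk Ω f T₀ k Dw)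
    {w : EVec n → Fin N → ℝ} {Dw : EVec n → Fin N → Fin n → ℝ} (hw : MemW12 Ω w Dw) :
    ∫ x in Ω, mdot (Amap f' (Du x) + (k : ℝ)⁻¹ • Du x - T₀ x) (Dw x) = 0 := by
  have hI1 : Integrable (fun x => mdot (Amap f' (Du x) + (k : ℝ)⁻¹ • Du x - T₀ x) (Dw x))
      (volume.restrict Ω) := (((hu.l2.amap H).add (hu.l2.smul _)).sub hT).mdot hw.l2
  set I1 := ∫ x in Ω, mdot (Amap f' (Du x) + (k : ℝ)⁻¹ • Du x - T₀ x) (Dw x) with hI1d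
  set I2 := ∫ x in Ω, (L + (2 * (k : ℝ))⁻¹) * mnorm (Dw x) ^ 2 with hI2d
  have hk0 : (0:ℝ) < k := by exact_mod_cast hk
  have hI2 : 0 ≤ I2 := integral_nonneg fun x => by have := H.hL; positivity
  have key : ∀ ε : ℝ, 0 ≤ ε * I1 + ε ^ 2 * I2 := by
    intro ε
    have hl2 : L2F (volume.restrict Ω) (fun x => Du x + ε • Dw x) := hu.l2.add (hw.l2.smul ε)
    have hmem : MemW12 Ω (fun x => u x + ε • w x) (fun x => Du x + ε • Dw x) := by
      refine MemW12.of_l2 (fun a => (hu.l2u a).add ((hw.l2u a).const_mul ε)) hl2 ?_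
      intro φ hφ hc hs a i
      have e1 := hu.1.2.2 φ hφ hc hs a i
      have e2 := hw.1.2.2 φ hφ hc hs a i
      have hφm : MemLp φ 2 (volume.restrict Ω) := (memLp_test hφ.continuous hc).restrict _
      have hφm' : MemLp (fun x => fderiv ℝ φ x (EuclideanSpace.single i 1)) 2 (volume.restrict Ω) :=
        (memLp_test ((hφ.continuous_fderiv one_ne_zero).clm_apply continuous_const)
          (hc.fderiv_apply ℝ _)).restrict _
      simp only [Pi.add_apply, Pi.smul_apply, smul_eq_mul, add_mul, mul_assoc]
      rw [integral_add (integrable_mul2 (hu.l2u a) hφm') ((integrable_mul2 (hw.l2u a) hφm').const_mul _),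
        integral_add (integrable_mul2 (hu.l2 a i) hφm) ((integrable_mul2 (hw.l2 a i) hφm).const_mul _),
        integral_const_mul, integral_const_mul, e1, e2]
      ring
    have h0 := hmin _ _ hmem
    obtain ⟨e1, i1⟩ := FFk_eq H hT k hu.l2
    obtain ⟨e2, i2⟩ := FFk_eq H hT k hl2
    rw [e1, e2] at h0
    have h3 := integral_mono (i2.sub i1) ((hI1.const_mul ε).add
      ((hw.l2.sq.const_mul (L + (2 * (k : ℝ))⁻¹)).const_mul (ε ^ 2))) (fun x => by
        have h4 := H.f_taylor (Du x) (Dw x) ε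
        have h5 : mnorm (Du x + ε • Dw x) ^ 2 = mnorm (Du x) ^ 2 + 2 * ε * mdot (Du x) (Dw x)
            + ε ^ 2 * mnorm (Dw x) ^ 2 := by
          simp only [mnorm_sq, mdot_add_left, mdot_add_right, mdot_smul_left, mdot_smul_right]
          rw [mdot_comm (Dw x) (Du x)]; ring
        simp only [Pi.sub_apply, Pi.add_apply]
        rw [h5, mdot_add_right, mdot_smul_right, mdot_sub_left, mdot_add_left, mdot_smul_left]
        have h6 : (2 * (k:ℝ))⁻¹ * (2 * ε * mdot (Du x) (Dw x)) = ε * ((k:ℝ)⁻¹ * mdot (Du x) (Dw x)) := by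
          rw [mul_inv]; ring
        linarith)
    simp only [Pi.sub_apply, Pi.add_apply] at h3
    rw [integral_sub i2 i1, integral_add (hI1.const_mul ε)
      ((hw.l2.sq.const_mul (L + (2 * (k : ℝ))⁻¹)).const_mul (ε ^ 2)), integral_const_mul,
      integral_const_mul] at h3
    linarith
  have h := key (-I1 / (I2 + 1))
  have hp : 0 < I2 + 1 := by linarith
  have e : -I1 / (I2 + 1) * I1 + (-I1 / (I2 + 1)) ^ 2 * I2 = - (I1 / (I2 + 1)) ^ 2 := by
    field_simp; ring
  rw [e] at h
  have h7 : I1 / (I2 + 1) = 0 := by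
    have := sq_nonneg (I1 / (I2 + 1))
    exact pow_eq_zero_iff (two_ne_zero) |>.1 (by linarith)
  exact (div_eq_zero_iff.1 h7).resolve_right hp.ne'

/-- uniform bound -/
theorem uniform_bound (H : FHyp f f' f'' L) [IsFiniteMeasure (volume.restrict Ω)]
    {T₀ : EVec n → Fin N → Fin n → ℝ} (hT : L2F (volume.restrict Ω) T₀)
    (finf : ℝ) (hfinf : Filter.Tendsto (fun t => f t / t) Filter.atTop (nhds finf))
    (hTsmall : linfNormOn Ω T₀ < ENNReal.ofReal finf) :
    ∃ C : ℝ, ∀ k : ℕ, 0 < k → ∀ (u : EVec n → Fin N → ℝ) (Du : EVec n → Fin N → Fin n → ℝ),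
      MemW12 Ω u Du → (∀ (w : EVec n → Fin N → ℝ) (Dw : EVec n → Fin N → Fin n → ℝ),
        MemW12 Ω w Dw → FFk Ω f T₀ k Du ≤ FFk Ω f T₀ k Dw) →
      (∫ x in Ω, mnorm (Du x)) ≤ C ∧ (k : ℝ)⁻¹ * ∫ x in Ω, mnorm (Du x) ^ 2 ≤ C := by
  have hne : linfNormOn Ω T₀ ≠ ⊤ := ne_top_of_lt hTsmall
  set m := (linfNormOn Ω T₀).toReal with hm
  have hm0 : 0 ≤ m := ENNReal.toReal_nonneg
  have hmf : m < finf := by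
    have : 0 < finf := by
      by_contra hc
      rw [ENNReal.ofReal_of_nonpos (not_lt.1 hc)] at hTsmall
      exact absurd hTsmall (by simp)
    exact (ENNReal.lt_ofReal_iff_toReal_lt hne).1 hTsmall
  have hTm : ∀ᵐ x ∂(volume.restrict Ω), mnorm (T₀ x) ≤ m := by
    have := ENNReal.ae_le_essSup (μ := volume.restrict Ω) (fun x => ENNReal.ofReal (mnorm (T₀ x)))
    filter_upwards [this] with x hx
    exact (ENNReal.ofReal_le_iff_le_toReal hne).1 hx
  obtain ⟨c, hmc, hcf⟩ := exists_between hmf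
  obtain ⟨t₀, ht₀⟩ := (eventually_atTop.1 ((hfinf.eventually (lt_mem_nhds hcf)).and
    (eventually_gt_atTop (0:ℝ))))
  have hc0 : 0 < c := by linarith
  set t₁ := max t₀ 0
  have hlow : ∀ t, 0 ≤ t → c * t - c * t₁ ≤ f t := by
    intro t ht
    rcases le_total t t₁ with h | h
    · have := H.f_nonneg ht
      nlinarith
    · have h2 := ht₀ t ((le_max_left _ _).trans h)
      have h3 := h2.1
      rw [lt_div_iff₀ h2.2] at h3
      have : 0 ≤ c * t₁ := mul_nonneg hc0.le (le_max_right _ _)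
      linarith
  set V := (volume.restrict Ω).real univ
  set B := c * t₁ * V with hB
  have hB0 : 0 ≤ B := mul_nonneg (mul_nonneg hc0.le (le_max_right _ _)) measureReal_nonneg
  refine ⟨max (B / (c - m)) (2 * B), fun k hk u Du hu hmin => ?_⟩
  have hk0 : (0:ℝ) < k := by exact_mod_cast hk
  have hz : MemW12 Ω (fun _ => (0 : Fin N → ℝ)) (fun _ => (0 : Fin N → Fin n → ℝ)) := by
    refine MemW12.of_l2 (fun a => by simp) (fun a i => by simp) ?_
    intro φ _ _ _ a i; simp
  have h0 := hmin _ _ hz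
  obtain ⟨e1, i1⟩ := FFk_eq H hT k hu.l2
  obtain ⟨e2, i2⟩ := FFk_eq H hT k hz.l2
  have hz2 : FFk Ω f T₀ k (fun _ => (0 : Fin N → Fin n → ℝ)) = 0 := by
    rw [e2]; simp [mdot, mnorm, H.hf0]
  rw [hz2, e1] at h0
  have hi : Integrable (fun x => mnorm (Du x)) (volume.restrict Ω) :=
    hu.l2.mnorm.integrable (by norm_num)
  have hi2 := hu.l2.sq.const_mul (2 * (k:ℝ))⁻¹
  have hi3 : Integrable (fun x => (c - m) * mnorm (Du x) - c * t₁) (volume.restrict Ω) :=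
    (hi.const_mul (c - m)).sub (integrable_const _)
  have h1 := integral_mono_ae (hi3.add hi2) i1 (by
    filter_upwards [hTm] with x hx
    have h4 := hlow _ (mnorm_nonneg (Du x))
    have h5 := (le_abs_self _).trans (mdot_le (T₀ x) (Du x))
    have h6 := mul_le_mul_of_nonneg_right hx (mnorm_nonneg (Du x))
    simp only [Pi.add_apply]
    linarith)
  simp only [Pi.add_apply] at h1
  rw [integral_add hi3 hi2, integral_sub (hi.const_mul _) (integrable_const _), integral_const_mul,
    integral_const_mul, integral_const, smul_eq_mul] at h1
  have hBe : c * (V * t₁) = B := by rw [hB]; ring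
  rw [hBe, integral_const_mul] at h1
  have hp1 : 0 ≤ ∫ x in Ω, mnorm (Du x) := integral_nonneg fun x => mnorm_nonneg _
  have hp2 : 0 ≤ (2 * (k:ℝ))⁻¹ * ∫ x in Ω, mnorm (Du x) ^ 2 :=
    mul_nonneg (by positivity) (integral_nonneg fun x => sq_nonneg _)
  have hcm : 0 < c - m := by linarith
  constructor
  · refine le_max_of_le_left ?_
    rw [le_div_iff₀ hcm]
    linarith
  · refine le_max_of_le_right ?_
    have : (k:ℝ)⁻¹ * ∫ x in Ω, mnorm (Du x) ^ 2 = 2 * ((2 * (k:ℝ))⁻¹ * ∫ x in Ω, mnorm (Du x) ^ 2) := by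
      rw [mul_inv]; ring
    rw [this]
    have := mul_nonneg hcm.le hp1
    linarith

end EL

section WDtools
variable {n N : ℕ}

theorem WD.shift {e : EVec n} {g g' : EVec n → ℝ} (h : WD e g g') (v : EVec n) :
    WD e (fun x => g (x + v)) (fun x => g' (x + v)) := by
  intro φ hφ hc
  obtain ⟨h1, h2, h3⟩ := test_shift hφ hc (-v)
  have := h _ h1 h2
  rw [← integral_shift _ v, ← integral_shift (fun x => g' x * φ (x + -v)) v] at this
  simpa [h3] using this

theorem memLp_fderiv_test {φ : EVec n → ℝ} (hφ : ContDiff ℝ 1 φ) (hc : HasCompactSupport φ) (e : EVec n) :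
    Continuous (fun x => fderiv ℝ φ x e) ∧ HasCompactSupport (fun x => fderiv ℝ φ x e) ∧
    MemLp (fun x => fderiv ℝ φ x e) 2 volume := by
  have h1 : Continuous (fun x => fderiv ℝ φ x e) :=
    (hφ.continuous_fderiv one_ne_zero).clm_apply continuous_const
  have h2 : HasCompactSupport (fun x => fderiv ℝ φ x e) := hc.fderiv_apply ℝ e
  exact ⟨h1, h2, memLp_test h1 h2⟩

theorem WD.dq {e d : EVec n} {g g' : EVec n → ℝ} (hg : MemLp g 2 volume) (hg' : MemLp g' 2 volume)
    (h : WD e g g') (t : ℝ) : WD e (dq d t g) (dq d t g') := by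
  intro φ hφ hc
  have h1 := h φ hφ hc
  have h2 := h.shift (t • d) φ hφ hc
  have hf := (memLp_fderiv_test hφ hc e).2.2
  have hp := memLp_test hφ.continuous hc
  have e1 : (fun x => _root_.dq d t g x * fderiv ℝ φ x e) =
      fun x => t⁻¹ * (g (x + t • d) * fderiv ℝ φ x e - g x * fderiv ℝ φ x e) := by
    funext x; simp only [_root_.dq]; ring
  have e2 : (fun x => _root_.dq d t g' x * φ x) =
      fun x => t⁻¹ * (g' (x + t • d) * φ x - g' x * φ x) := by
    funext x; simp only [_root_.dq]; ring
  rw [e1, e2, integral_const_mul, integral_const_mul,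
    integral_sub (integrable_mul2 (memLp_shift hg _) hf) (integrable_mul2 hg hf),
    integral_sub (integrable_mul2 (memLp_shift hg' _) hp) (integrable_mul2 hg' hp), h1, h2]
  ring

theorem WD.mul {e : EVec n} {g g' η : EVec n → ℝ} (hg : MemLp g 2 volume) (hg' : MemLp g' 2 volume)
    (h : WD e g g') (hη : ContDiff ℝ 1 η) :
    WD e (fun x => η x * g x) (fun x => η x * g' x + fderiv ℝ η x e * g x) := by
  intro φ hφ hc
  have hηφ : HasCompactSupport (fun x => η x * φ x) := hc.mul_left
  have h1 := h (fun x => η x * φ x) (hη.mul hφ) hηφ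
  have hfc := memLp_fderiv_test hφ hc e
  have hηc : Continuous (fun x => fderiv ℝ η x e) :=
    (hη.continuous_fderiv one_ne_zero).clm_apply continuous_const
  have i1 : Integrable (fun x => g x * (η x * fderiv ℝ φ x e)) volume :=
    integrable_mul2 hg (memLp_test (hη.continuous.mul hfc.1) hfc.2.1.mul_left)
  have i2 : Integrable (fun x => g x * (fderiv ℝ η x e * φ x)) volume :=
    integrable_mul2 hg (memLp_test (hηc.mul hφ.continuous) hc.mul_left)
  have i3 : Integrable (fun x => g' x * (η x * φ x)) volume :=
    integrable_mul2 hg' (memLp_test (hη.continuous.mul hφ.continuous) hηφ)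
  have e1 : (fun x => g x * fderiv ℝ (fun x => η x * φ x) x e) =
      fun x => g x * (η x * fderiv ℝ φ x e) + g x * (fderiv ℝ η x e * φ x) := by
    funext x
    rw [fderiv_fun_mul (hη.differentiable one_ne_zero x) (hφ.differentiable one_ne_zero x)]
    simp only [add_apply, smul_apply, smul_eq_mul]
    ring
  rw [e1, integral_add i1 i2] at h1
  have e2 : (fun x => η x * g x * fderiv ℝ φ x e) = fun x => g x * (η x * fderiv ℝ φ x e) := by
    funext x; ring
  have e3 : (fun x => (η x * g' x + fderiv ℝ η x e * g x) * φ x) =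
    fun x => g' x * (η x * φ x) + g x * (fderiv ℝ η x e * φ x) := by funext x; ring
  rw [e2, e3, integral_add i3 i2]
  linarith

theorem memLp_mul_bdd {α : Type*} [MeasurableSpace α] {μ : Measure α} {η g : α → ℝ} (hg : MemLp g 2 μ) (hη : AEStronglyMeasurable η μ)
    {C : ℝ} (hC : ∀ x, |η x| ≤ C) : MemLp (fun x => η x * g x) 2 μ := by
  refine MemLp.of_le_mul (c := C) hg (hη.mul hg.aestronglyMeasurable) (Eventually.of_forall fun x => ?_)
  rw [norm_mul]
  exact mul_le_mul_of_nonneg_right (hC x) (norm_nonneg _)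

theorem test_bdd {φ : EVec n → ℝ} (h : Continuous φ) (hc : HasCompactSupport φ) : ∃ C, 0 ≤ C ∧ ∀ x, |φ x| ≤ C := by
  obtain ⟨C, hC⟩ := hc.exists_bound_of_continuous h
  exact ⟨max C 0, le_max_right _ _, fun x => (hC x).trans (le_max_left _ _)⟩

theorem memLp_mul_test {η g : EVec n → ℝ} (hg : MemLp g 2 volume) (h : Continuous η) (hc : HasCompactSupport η) :
    MemLp (fun x => η x * g x) 2 volume := by
  obtain ⟨C, _, hC⟩ := test_bdd h hc
  exact memLp_mul_bdd hg h.aestronglyMeasurable hC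

variable {Ω : Set (EVec n)}

theorem memLp_glob (hΩ : IsOpen Ω) {χ g : EVec n → ℝ} (hg : MemLp g 2 (volume.restrict Ω))
    (h : Continuous χ) (hc : HasCompactSupport χ) (hs : tsupport χ ⊆ Ω) :
    MemLp (fun x => χ x * g x) 2 volume := by
  obtain ⟨C, _, hC⟩ := test_bdd h hc
  have h1 := memLp_mul_bdd hg h.aestronglyMeasurable hC
  rw [← memLp_indicator_iff_restrict hΩ.measurableSet] at h1
  have h2 : Ω.indicator (fun x => χ x * g x) = fun x => χ x * g x := by
    refine indicator_eq_self.2 fun x hx => hs (subset_tsupport χ ?_)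
    exact fun h0 => hx (by simp [h0])
  rwa [h2] at h1

theorem setInt_eq {F : EVec n → ℝ} (h : ∀ x, x ∉ Ω → F x = 0) : ∫ x in Ω, F x = ∫ x, F x :=
  setIntegral_eq_integral_of_forall_compl_eq_zero h

/-- cutting off a local weak derivative -/
theorem WD_glob (hΩ : IsOpen Ω) {u : EVec n → Fin N → ℝ} {Du : EVec n → Fin N → Fin n → ℝ}
    (hu : MemW12 Ω u Du) {χ : EVec n → ℝ} (hχ : ContDiff ℝ 1 χ) (hc : HasCompactSupport χ)
    (hs : tsupport χ ⊆ Ω) (a : Fin N) (i : Fin n) :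
    WD (EuclideanSpace.single i 1) (fun x => χ x * u x a)
      (fun x => χ x * Du x a i + fderiv ℝ χ x (EuclideanSpace.single i 1) * u x a) := by
  intro φ hφ hcφ
  set e : EVec n := EuclideanSpace.single i 1
  have hηφ : HasCompactSupport (fun x => χ x * φ x) := hcφ.mul_left
  have hsp : tsupport (fun x => χ x * φ x) ⊆ Ω := (tsupport_mul_subset_left).trans hs
  have h1 := hu.1.2.2 (fun x => χ x * φ x) (hχ.mul hφ) hηφ hsp a i
  have hz : ∀ x, x ∉ Ω → χ x = 0 := fun x hx => image_eq_zero_of_notMem_tsupport fun h => hx (hs h)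
  have hz' : ∀ x, x ∉ Ω → fderiv ℝ χ x e = 0 := fun x hx => by
    rw [fderiv_of_notMem_tsupport ℝ (fun h => hx (hs h))]; simp
  have hfc := memLp_fderiv_test hφ hcφ e
  have hχc := memLp_fderiv_test hχ hc e
  have hsχ : tsupport (fun x => fderiv ℝ χ x e) ⊆ Ω := (tsupport_fderiv_apply_subset ℝ e).trans hs
  have g1 := memLp_glob hΩ (hu.l2u a) hχ.continuous hc hs
  have g2 := memLp_glob hΩ (hu.l2 a i) hχ.continuous hc hs
  have g3 := memLp_glob hΩ (hu.l2u a) hχc.1 hχc.2.1 hsχ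
  have hp := memLp_test hφ.continuous hcφ
  have i1 := integrable_mul2 g1 hfc.2.2
  have i2 := integrable_mul2 g2 hp
  have i3 := integrable_mul2 g3 hp
  rw [setInt_eq, setInt_eq] at h1
  · have e1 : (fun x => u x a * fderiv ℝ (fun x => χ x * φ x) x e) =
        fun x => χ x * u x a * fderiv ℝ φ x e + fderiv ℝ χ x e * u x a * φ x := by
      funext x
      rw [fderiv_fun_mul (hχ.differentiable one_ne_zero x) (hφ.differentiable one_ne_zero x)]
      simp only [add_apply, smul_apply, smul_eq_mul]
      ring
    have e2 : (fun x => Du x a i * (χ x * φ x)) = fun x => χ x * Du x a i * φ x := by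
      funext x; ring
    rw [e1, e2, integral_add i1 i3] at h1
    simp only [add_mul]
    rw [integral_add i2 i3]
    linarith
  · intro x hx; simp [hz x hx]
  · intro x hx
    rw [fderiv_of_notMem_tsupport ℝ (fun h => hx (hsp h))]; simp

/-- a global weak derivative gives the weak derivative formula on `Ω` -/
theorem WD.local {e : EVec n} {g g' : EVec n → ℝ} (h : WD e g g') {φ : EVec n → ℝ} (hφ : ContDiff ℝ 1 φ)
    (hc : HasCompactSupport φ) (hs : tsupport φ ⊆ Ω) :
    ∫ x in Ω, g x * fderiv ℝ φ x e = - ∫ x in Ω, g' x * φ x := by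
  rw [setInt_eq, setInt_eq, h φ hφ hc]
  · intro x hx; rw [image_eq_zero_of_notMem_tsupport fun h => hx (hs h), mul_zero]
  · intro x hx; rw [fderiv_of_notMem_tsupport ℝ (fun h => hx (hs h))]; simp

/-- componentwise convergence to zero implies convergence of the energy -/
theorem energy_tendsto {ι : Type*} {l : Filter ι} {Z : ι → EVec n → Fin N → Fin n → ℝ}
    (hZ : ∀ h, L2F volume (Z h))
    (ht : ∀ a i, Tendsto (fun h => eLpNorm (fun x => Z h x a i) 2 volume) l (𝓝 0)) :
    Tendsto (fun h => ∫ x, mnorm (Z h x) ^ 2) l (𝓝 0) := by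
  have key : ∀ h, ∫ x, mnorm (Z h x) ^ 2 =
      ∑ a, ∑ i, ((eLpNorm (fun x => Z h x a i) 2 volume).toReal) ^ 2 := by
    intro h
    simp only [mnorm_sq, mdot]
    rw [integral_finsetSum _ fun a _ => integrable_finsetSum _ fun i _ => integrable_mul2 (hZ h a i) (hZ h a i)]
    refine Finset.sum_congr rfl fun a _ => ?_
    rw [integral_finsetSum _ fun i _ => integrable_mul2 (hZ h a i) (hZ h a i)]
    refine Finset.sum_congr rfl fun i _ => ?_
    rw [← inner_toLp (hZ h a i) (hZ h a i), real_inner_self_eq_norm_sq, Lp.norm_toLp]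
  simp only [key]
  have : (0:ℝ) = ∑ a : Fin N, ∑ i : Fin n, ((0:ℝ≥0∞).toReal) ^ 2 := by simp
  rw [this]
  refine tendsto_finsetSum _ fun a _ => tendsto_finsetSum _ fun i _ => Tendsto.pow ?_ 2
  exact (ENNReal.tendsto_toReal (by simp)).comp (ht a i)

end WDtools

section CoreSec
variable {n N : ℕ}

/-- coordinate directions -/
noncomputable abbrev ee (i : Fin n) : EVec n := EuclideanSpace.single i 1

/-- difference quotient of a matrix field -/
noncomputable def dqF (s : Fin n) (h : ℝ) (Z : EVec n → Fin N → Fin n → ℝ) (x : EVec n) : Fin N → Fin n → ℝ :=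
  fun a i => dq (ee s) h (fun y => Z y a i) x

theorem dqF_eq (s : Fin n) (h : ℝ) (Z : EVec n → Fin N → Fin n → ℝ) (x : EVec n) :
    dqF s h Z x = h⁻¹ • (Z (x + h • ee s) - Z x) := by
  funext a i
  simp [dqF, dq, div_eq_inv_mul]

theorem L2F.dqF {Z : EVec n → Fin N → Fin n → ℝ} (hZ : L2F volume Z) (s : Fin n) (h : ℝ) :
    L2F volume (dqF s h Z) := fun a i => memLp_dq (hZ a i) _ _

theorem L2F.shift {Z : EVec n → Fin N → Fin n → ℝ} (hZ : L2F volume Z) (v : EVec n) :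
    L2F volume (fun x => Z (x + v)) := fun a i => memLp_shift (hZ a i) _

theorem int_mdot {α : Type*} [MeasurableSpace α] {μ : Measure α} {Z W : α → Fin N → Fin n → ℝ} (hZ : L2F μ Z) (hW : L2F μ W) :
    ∫ x, mdot (Z x) (W x) ∂μ = ∑ a, ∑ i, ∫ x, Z x a i * W x a i ∂μ := by
  simp only [mdot]
  rw [integral_finsetSum _ fun a _ => integrable_finsetSum _ fun i _ => integrable_mul2 (hZ a i) (hW a i)]
  refine Finset.sum_congr rfl fun a _ => ?_
  rw [integral_finsetSum _ fun i _ => integrable_mul2 (hZ a i) (hW a i)]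

theorem dqF_pair {Z W : EVec n → Fin N → Fin n → ℝ} (hZ : L2F volume Z) (hW : L2F volume W) (s : Fin n) (h : ℝ) :
    ∫ x, mdot (dqF s h Z x) (W x) = - ∫ x, mdot (Z x) (dqF s (-h) W x) := by
  rw [int_mdot (hZ.dqF s h) hW, int_mdot hZ (hW.dqF s (-h)), ← Finset.sum_neg_distrib]
  refine Finset.sum_congr rfl fun a _ => ?_
  rw [← Finset.sum_neg_distrib]
  refine Finset.sum_congr rfl fun i _ => ?_
  exact dq_pair (hZ a i) (hW a i) _ _

theorem Mr_int {α : Type*} [MeasurableSpace α] {μ : Measure α} {f f' f'' : ℝ → ℝ} {L : ℝ} (H : FHyp f f' f'' L)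
    {z z' Z : α → Fin N → Fin n → ℝ}
    (hz : AEStronglyMeasurable z μ) (hz' : AEStronglyMeasurable z' μ) (hZ : L2F μ Z) :
    Integrable (fun x => Mr f' f'' (z x) (z' x) (Z x)) μ := by
  have h1 := hz.prodMk (hz'.prodMk hZ.aesm)
  have h2 := H.Mr_cont (N := N) (n := n)
  have hm := h2.comp_aestronglyMeasurable h1
  refine (hZ.sq.const_mul L).mono' hm (Eventually.of_forall fun x => ?_)
  rw [Real.norm_eq_abs, abs_of_nonneg (H.Mr_nonneg _ _ _)]
  exact H.Mr_le _ _ _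

/-- the data of the localised problem -/
structure Core (f' : ℝ → ℝ) (κ : ℝ) (s : Fin n) (η : EVec n → ℝ) (δ CT : ℝ)
    (v : EVec n → Fin N → ℝ) (Dv T : EVec n → Fin N → Fin n → ℝ) : Prop where
  hκ : 0 < κ
  hδ : 0 < δ
  hCT : 0 ≤ CT
  hη : ContDiff ℝ 1 η
  hηc : HasCompactSupport η
  hv : ∀ a, MemLp (fun x => v x a) 2 volume
  hDv : L2F volume Dv
  hW : ∀ a i, WD (ee i) (fun x => v x a) (fun x => Dv x a i)
  hT : ∀ a i, ContDiff ℝ 1 (fun x => T x a i)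
  hTc : ∀ a i, HasCompactSupport (fun x => T x a i)
  hTl : ∀ h : ℝ, |h| < δ → ∀ x ∈ tsupport η, ∀ a i,
    |fderiv ℝ (fun y => T y a i) (x + h • ee s) (ee i) - fderiv ℝ (fun y => T y a i) x (ee i)| ≤ CT * |h|
  hEL : ∀ (w : EVec n → Fin N → ℝ) (Dw : EVec n → Fin N → Fin n → ℝ),
    (∀ a, MemLp (fun x => w x a) 2 volume) → L2F volume Dw →
    (∀ a i, WD (ee i) (fun x => w x a) (fun x => Dw x a i)) →
    (∀ x, x ∉ Metric.thickening δ (tsupport η) → w x = 0 ∧ Dw x = 0) →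
    ∫ x, mdot (Amap f' (Dv x) + κ • Dv x - T x) (Dw x) = 0

/-- commutator field -/
noncomputable def zeF (s : Fin n) (η : EVec n → ℝ) (v : EVec n → Fin N → ℝ) (h : ℝ) (x : EVec n) :
    Fin N → Fin n → ℝ :=
  fun a i => (2 * fderiv ℝ η x (ee i)) * dq (ee s) h (fun y => v y a) x

variable {f f' f'' : ℝ → ℝ} {L κ δ CT : ℝ} {s : Fin n} {η : EVec n → ℝ}
  {v : EVec n → Fin N → ℝ} {Dv T : EVec n → Fin N → Fin n → ℝ}

namespace Core

theorem cont2 (C : Core f' κ s η δ CT v Dv T) (i : Fin n) :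
    Continuous (fun x => 2 * fderiv ℝ η x (ee i)) ∧ HasCompactSupport (fun x => 2 * fderiv ℝ η x (ee i)) := by
  have h := memLp_fderiv_test C.hη C.hηc (ee i)
  exact ⟨continuous_const.mul h.1, h.2.1.mul_left⟩

theorem l2ze (C : Core f' κ s η δ CT v Dv T) (h : ℝ) : L2F volume (zeF s η v h) := fun a i =>
  memLp_mul_test (memLp_dq (C.hv a) _ h) (C.cont2 i).1 (C.cont2 i).2

theorem ptwise (H : FHyp f f' f'' L) (hκ : 0 < κ) (z z' ζ : Fin N → Fin n → ℝ) (e h : ℝ) :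
    e ^ 2 * (Mr f' f'' z z' (h⁻¹ • (z' - z)) + κ * mnorm (h⁻¹ • (z' - z)) ^ 2)
      - (Mr f' f'' z z' ζ + κ * mnorm ζ ^ 2) ≤
    2 * mdot (h⁻¹ • ((Amap f' z' + κ • z') - (Amap f' z + κ • z))) (e ^ 2 • (h⁻¹ • (z' - z)) + e • ζ) := by
  have h1 := H.Mr_diff z z' h⁻¹
  have h2 := H.Mr_young z z' ζ (-(e * h⁻¹))
  have hexp : ∀ d : Fin N → Fin n → ℝ, 0 ≤ e ^ 2 * mdot d d + 2 * e * mdot d ζ + mdot ζ ζ := by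
    intro d
    have h4 : 0 ≤ mnorm (e • d + ζ) ^ 2 := sq_nonneg _
    simp only [mnorm_sq, mdot_add_right, mdot_add_left, mdot_smul_left, mdot_smul_right] at h4
    rw [mdot_comm ζ d] at h4
    linarith
  set d := h⁻¹ • (z' - z) with hd
  clear_value d
  have h7 : h⁻¹ • ((Amap f' z' + κ • z') - (Amap f' z + κ • z)) = h⁻¹ • (Amap f' z' - Amap f' z) + κ • d := by
    rw [hd]; module
  have h4 := hexp d
  have h5 : mdot (Amap f' z' - Amap f' z) d = h⁻¹ * mdot (Amap f' z' - Amap f' z) (z' - z) := by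
    rw [hd, mdot_smul_right]
  rw [h7]
  simp only [mdot_add_right, mdot_add_left, mdot_smul_left, mdot_smul_right, mnorm_sq]
  rw [h5, h1]
  have h6 := mul_nonneg hκ.le h4
  nlinarith

theorem fderiv_sq (C : Core f' κ s η δ CT v Dv T) (x e : EVec n) :
    fderiv ℝ (fun x => η x ^ 2) x e = 2 * η x * fderiv ℝ η x e := by
  have := ((C.hη.differentiable one_ne_zero x).hasFDerivAt.pow 2).fderiv
  rw [this]; simp

theorem energy (H : FHyp f f' f'' L) (C : Core f' κ s η δ CT v Dv T) {h : ℝ} (h0 : h ≠ 0) (hδ : |h| < δ) :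
    ∫ x, η x ^ 2 * (Mr f' f'' (Dv x) (Dv (x + h • ee s)) (dqF s h Dv x) + κ * mnorm (dqF s h Dv x) ^ 2) ≤
      (∫ x, (Mr f' f'' (Dv x) (Dv (x + h • ee s)) (zeF s η v h x) + κ * mnorm (zeF s η v h x) ^ 2)) +
      2 * ∑ a, ∑ _i : Fin n, CT * ∫ x, η x ^ 2 * |dq (ee s) h (fun y => v y a) x| := by
  have hη2 : ContDiff ℝ 1 (fun x => η x ^ 2) := C.hη.pow 2
  have hη2c : HasCompactSupport (fun x => η x ^ 2) := by
    simp only [pow_two]; exact C.hηc.mul_left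
  set ψ : EVec n → Fin N → ℝ := fun x a => η x ^ 2 * dq (ee s) h (fun y => v y a) x with hψ
  set W : EVec n → Fin N → Fin n → ℝ := fun x a i =>
    η x ^ 2 * dq (ee s) h (fun y => Dv y a i) x + fderiv ℝ (fun x => η x ^ 2) x (ee i) * dq (ee s) h (fun y => v y a) x with hWd
  have hψ2 : ∀ a, MemLp (fun x => ψ x a) 2 volume := fun a =>
    memLp_mul_test (memLp_dq (C.hv a) _ h) hη2.continuous hη2c
  have hW2 : L2F volume W := by
    intro a i
    have hf := memLp_fderiv_test hη2 hη2c (ee i)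
    exact (memLp_mul_test (memLp_dq (C.hDv a i) _ h) hη2.continuous hη2c).add
      (memLp_mul_test (memLp_dq (C.hv a) _ h) hf.1 hf.2.1)
  have hψW : ∀ a i, WD (ee i) (fun x => ψ x a) (fun x => W x a i) := fun a i =>
    WD.mul (memLp_dq (C.hv a) _ h) (memLp_dq (C.hDv a i) _ h) (WD.dq (C.hv a) (C.hDv a i) (C.hW a i) h) hη2
  have hz : ∀ x, x ∉ tsupport η → ψ x = 0 ∧ W x = 0 := by
    intro x hx
    have e0 : η x = 0 := image_eq_zero_of_notMem_tsupport hx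
    constructor
    · funext a; simp [hψ, e0]
    · funext a i; simp [hWd, e0, C.fderiv_sq]
  have hP : L2F volume (fun x => Amap f' (Dv x) + κ • Dv x) := (C.hDv.amap H).add (C.hDv.smul κ)
  have hT2 : L2F volume T := fun a i => memLp_test (C.hT a i).continuous (C.hTc a i)
  have hEL := C.hEL (fun x a => dq (ee s) (-h) (fun y => ψ y a) x) (dqF s (-h) W)
    (fun a => memLp_dq (hψ2 a) _ _) (hW2.dqF s (-h)) (fun a i => WD.dq (hψ2 a) (hW2 a i) (hψW a i) (-h)) (by
      intro x hx
      have hx1 : x ∉ tsupport η := fun h' => hx (Metric.self_subset_thickening C.hδ _ h')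
      have hx2 : x + (-h) • ee s ∉ tsupport η := fun h' => hx (by
        rw [Metric.mem_thickening_iff]
        refine ⟨_, h', ?_⟩
        rw [dist_eq_norm]
        have : x - (x + -h • ee s) = h • ee s := by module
        rw [this, norm_smul]; simpa using hδ)
      constructor
      · funext a
        simp [dq, (hz x hx1).1, -neg_smul, (hz _ hx2).1]
      · rw [dqF_eq, (hz x hx1).2, (hz _ hx2).2]; simp)
  have h1 := dqF_pair (hP.sub hT2) hW2 s h
  rw [hEL, neg_zero] at h1
  have e1 : ∀ x, mdot (dqF s h (fun x => Amap f' (Dv x) + κ • Dv x - T x) x) (W x) =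
      mdot (dqF s h (fun x => Amap f' (Dv x) + κ • Dv x) x) (W x) - mdot (dqF s h T x) (W x) := by
    intro x
    rw [← mdot_sub_left]
    congr 1
    simp only [dqF_eq]; module
  simp only [e1] at h1
  rw [integral_sub ((hP.dqF s h).mdot hW2) ((hT2.dqF s h).mdot hW2), sub_eq_zero,
    int_mdot (hT2.dqF s h) hW2] at h1
  have h2 : ∀ a i, ∫ x, dqF s h T x a i * W x a i ≤ CT * ∫ x, η x ^ 2 * |dq (ee s) h (fun y => v y a) x| := by
    intro a i
    obtain ⟨t1, t2, t3⟩ := test_shift (C.hT a i) (C.hTc a i) (h • ee s)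
    have q1 : ContDiff ℝ 1 (dq (ee s) h (fun y => T y a i)) := by
      unfold dq; exact (t1.sub (C.hT a i)).div_const h
    have q2 : HasCompactSupport (dq (ee s) h (fun y => T y a i)) := by
      have : dq (ee s) h (fun y => T y a i) = fun x => h⁻¹ * ((fun y => T (y + h • ee s) a i) - (fun y => T y a i)) x := by
        funext x; simp [dq, div_eq_inv_mul]
      rw [this]; exact (t2.sub (C.hTc a i)).mul_left
    have q3 : ∀ x, fderiv ℝ (dq (ee s) h (fun y => T y a i)) x (ee i) =
        h⁻¹ * (fderiv ℝ (fun y => T y a i) (x + h • ee s) (ee i) - fderiv ℝ (fun y => T y a i) x (ee i)) := by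
      intro x
      have d1 := (t1.differentiable one_ne_zero x).hasFDerivAt
      have d2 := ((C.hT a i).differentiable one_ne_zero x).hasFDerivAt
      have d3 := ((d1.sub d2).const_mul h⁻¹).fderiv
      have : dq (ee s) h (fun y => T y a i) = fun x => h⁻¹ * ((fun y => T (y + h • ee s) a i) - (fun y => T y a i)) x := by
        funext x; simp [dq, div_eq_inv_mul]
      rw [this, d3]
      simp [t3]
    have h3 := hψW a i _ q1 q2
    have h4 : ∫ x, dqF s h T x a i * W x a i =
        ∫ x, - (ψ x a * fderiv ℝ (dq (ee s) h (fun y => T y a i)) x (ee i)) := by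
      rw [integral_neg, h3, neg_neg]
      refine integral_congr_ae (Eventually.of_forall fun x => ?_)
      simp [dqF, mul_comm]
    rw [h4, ← integral_const_mul]
    refine integral_mono (integrable_mul2 (hψ2 a) (memLp_fderiv_test q1 q2 _).2.2).neg ?_ ?_
    · refine Integrable.const_mul ?_ _
      exact integrable_mul2 (memLp_test hη2.continuous hη2c) (memLp_dq (C.hv a) _ h).abs
    · intro x
      by_cases hx : x ∈ tsupport η
      · have h5 := C.hTl h hδ x hx a i
        have h6 : |fderiv ℝ (dq (ee s) h (fun y => T y a i)) x (ee i)| ≤ CT := by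
          rw [q3, abs_mul, abs_inv]
          rw [inv_mul_le_iff₀ (abs_pos.2 h0)]
          linarith
        refine (neg_le_abs _).trans ?_
        rw [abs_mul]
        simp only [hψ]
        rw [abs_mul, abs_of_nonneg (sq_nonneg (η x))]
        have := mul_le_mul_of_nonneg_left h6 (mul_nonneg (sq_nonneg (η x)) (abs_nonneg (dq (ee s) h (fun y => v y a) x)))
        linarith
      · have e0 : η x = 0 := image_eq_zero_of_notMem_tsupport hx
        simp [hψ, e0]
  have h3 : ∫ x, mdot (dqF s h (fun x => Amap f' (Dv x) + κ • Dv x) x) (W x) ≤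
      ∑ a, ∑ _i : Fin n, CT * ∫ x, η x ^ 2 * |dq (ee s) h (fun y => v y a) x| := by
    rw [h1]
    exact Finset.sum_le_sum fun a _ => Finset.sum_le_sum fun i _ => h2 a i
  have hsh := C.hDv.shift (h • ee s)
  have hd := C.hDv.dqF s h
  have hzz := C.l2ze h
  obtain ⟨B, hB0, hB⟩ := test_bdd hη2.continuous hη2c
  have i1 : Integrable (fun x => η x ^ 2 * (Mr f' f'' (Dv x) (Dv (x + h • ee s)) (dqF s h Dv x) + κ * mnorm (dqF s h Dv x) ^ 2)) volume :=
    ((Mr_int H C.hDv.aesm hsh.aesm hd).add (hd.sq.const_mul κ)).bdd_mul hη2.continuous.aestronglyMeasurable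
      (Eventually.of_forall hB)
  have i2 : Integrable (fun x => Mr f' f'' (Dv x) (Dv (x + h • ee s)) (zeF s η v h x) + κ * mnorm (zeF s η v h x) ^ 2) volume :=
    (Mr_int H C.hDv.aesm hsh.aesm hzz).add (hzz.sq.const_mul κ)
  have h4 := integral_mono (i1.sub i2) (((hP.dqF s h).mdot hW2).const_mul 2) (fun x => by
    have := ptwise H C.hκ (Dv x) (Dv (x + h • ee s)) (zeF s η v h x) (η x) h
    have hWx : W x = η x ^ 2 • (h⁻¹ • (Dv (x + h • ee s) - Dv x)) + η x • zeF s η v h x := by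
      funext a i
      simp only [hWd, C.fderiv_sq, zeF, dq, Pi.add_apply, Pi.smul_apply, Pi.sub_apply, smul_eq_mul]
      ring
    simp only [dqF_eq, Pi.sub_apply]
    rw [hWx]
    exact this)
  rw [integral_const_mul] at h4
  simp only [Pi.sub_apply] at h4
  rw [integral_sub i1 i2] at h4
  linarith

end Core
end CoreSec

section CoreSec2
variable {n N : ℕ}
variable {f f' f'' : ℝ → ℝ} {L κ δ CT : ℝ} {s : Fin n} {η : EVec n → ℝ}
  {v : EVec n → Fin N → ℝ} {Dv T : EVec n → Fin N → Fin n → ℝ}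

theorem mnorm_add_sq (z w : Fin N → Fin n → ℝ) : mnorm (z + w) ^ 2 ≤ 2 * mnorm z ^ 2 + 2 * mnorm w ^ 2 := by
  simp only [← toE_norm, toE_add]
  have h := norm_add_le (toE z) (toE w)
  have := pow_le_pow_left₀ (norm_nonneg _) h 2
  nlinarith [sq_nonneg (‖toE z‖ - ‖toE w‖)]

/-- the limit of the commutator field -/
noncomputable def ze0 (s : Fin n) (η : EVec n → ℝ) (Dv : EVec n → Fin N → Fin n → ℝ) (x : EVec n) :
    Fin N → Fin n → ℝ :=
  fun a i => (2 * fderiv ℝ η x (ee i)) * Dv x a s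

/-- combined form -/
noncomputable def MK (f' f'' : ℝ → ℝ) (κ : ℝ) (z z' ζ : Fin N → Fin n → ℝ) : ℝ :=
  Mr f' f'' z z' ζ + κ * mnorm ζ ^ 2

theorem MK_add (H : FHyp f f' f'' L) (hκ : 0 < κ) (z z' ξ ζ : Fin N → Fin n → ℝ) :
    MK f' f'' κ z z' (ξ + ζ) ≤ 2 * MK f' f'' κ z z' ξ + 2 * (L + κ) * mnorm ζ ^ 2 := by
  unfold MK
  have h1 := H.Mr_add_le z z' ξ ζ
  have h2 := H.Mr_le z z' ζ
  have h3 := mul_le_mul_of_nonneg_left (mnorm_add_sq ξ ζ) hκ.le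
  linarith

theorem MK_le (H : FHyp f f' f'' L) (z z' ζ : Fin N → Fin n → ℝ) :
    MK f' f'' κ z z' ζ ≤ (L + κ) * mnorm ζ ^ 2 := by
  unfold MK
  have h2 := H.Mr_le z z' ζ
  linarith

theorem MK_nonneg (H : FHyp f f' f'' L) (hκ : 0 < κ) (z z' ζ : Fin N → Fin n → ℝ) :
    0 ≤ MK f' f'' κ z z' ζ :=
  add_nonneg (H.Mr_nonneg _ _ _) (mul_nonneg hκ.le (sq_nonneg _))

theorem MK_int {α : Type*} [MeasurableSpace α] {μ : Measure α} (H : FHyp f f' f'' L)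
    {z z' Z : α → Fin N → Fin n → ℝ}
    (hz : AEStronglyMeasurable z μ) (hz' : AEStronglyMeasurable z' μ) (hZ : L2F μ Z) (κ : ℝ) :
    Integrable (fun x => MK f' f'' κ (z x) (z' x) (Z x)) μ :=
  (Mr_int H hz hz' hZ).add (hZ.sq.const_mul κ)

theorem MK_tendsto {α : Type*} [MeasurableSpace α] {μ : Measure α} (H : FHyp f f' f'' L) (hκ : 0 < κ)
    {z Z : α → Fin N → Fin n → ℝ} {z' : ℕ → α → Fin N → Fin n → ℝ}
    (hz : AEStronglyMeasurable z μ) (hz' : ∀ j, AEStronglyMeasurable (z' j) μ) (hZ : L2F μ Z)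
    (ht : ∀ᵐ x ∂μ, Tendsto (fun j => z' j x) atTop (𝓝 (z x))) :
    Tendsto (fun j => ∫ x, MK f' f'' κ (z x) (z' j x) (Z x) ∂μ) atTop
      (𝓝 (∫ x, (QA f' f'' (z x) (Z x) + κ * mnorm (Z x) ^ 2) ∂μ)) := by
  refine tendsto_integral_of_dominated_convergence (fun x => (L + κ) * mnorm (Z x) ^ 2)
    (fun j => (MK_int H hz (hz' j) hZ κ).aestronglyMeasurable) (hZ.sq.const_mul _) ?_ ?_
  · intro j
    refine Eventually.of_forall fun x => ?_
    rw [Real.norm_eq_abs, abs_of_nonneg (MK_nonneg H hκ _ _ _)]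
    exact MK_le H _ _ _
  · filter_upwards [ht] with x hx
    rw [← FHyp.Mr_self]
    refine Tendsto.add_const _ ?_
    have h1 := (H.Mr_cont (N := N) (n := n)).tendsto (z x, z x, Z x)
    have h2 : Tendsto (fun j => (z x, z' j x, Z x)) atTop (𝓝 (z x, z x, Z x)) :=
      tendsto_const_nhds.prodMk_nhds (hx.prodMk_nhds tendsto_const_nhds)
    have h3 := h1.comp h2
    exact h3

namespace Core

theorem l2ze0 (C : Core f' κ s η δ CT v Dv T) : L2F volume (ze0 s η Dv) := fun a i =>
  memLp_mul_test (C.hDv a s) (C.cont2 i).1 (C.cont2 i).2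

theorem ze_tendsto (C : Core f' κ s η δ CT v Dv T) :
    Tendsto (fun h => ∫ x, mnorm (zeF s η v h x - ze0 s η Dv x) ^ 2) (𝓝[≠] 0) (𝓝 0) := by
  refine energy_tendsto (fun h => (C.l2ze h).sub C.l2ze0) fun a i => ?_
  obtain ⟨B, hB0, hB⟩ := test_bdd (C.cont2 i).1 (C.cont2 i).2
  have h1 := dq_tendsto (C.hv a) (C.hDv a s) (C.hW a s)
  have h2 := ENNReal.Tendsto.const_mul (a := ENNReal.ofReal B) h1 (Or.inr (by simp))
  rw [mul_zero] at h2
  refine tendsto_of_tendsto_of_tendsto_of_le_of_le tendsto_const_nhds h2 (fun _ => zero_le) fun h => ?_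
  refine eLpNorm_le_mul_eLpNorm_of_ae_le_mul (Eventually.of_forall fun x => ?_) 2
  have : (zeF s η v h x - ze0 s η Dv x) a i =
      (2 * fderiv ℝ η x (ee i)) * (dq (ee s) h (fun y => v y a) x - Dv x a s) := by
    simp only [Pi.sub_apply, zeF, ze0]; ring
  simp only [this]
  rw [norm_mul]
  exact mul_le_mul_of_nonneg_right (hB x) (norm_nonneg _)

theorem rhs_bound (H : FHyp f f' f'' L) (C : Core f' κ s η δ CT v Dv T) :
    ∃ err : ℝ → ℝ, Tendsto err (𝓝[≠] 0) (𝓝 0) ∧ ∀ h : ℝ,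
      (∫ x, (Mr f' f'' (Dv x) (Dv (x + h • ee s)) (zeF s η v h x) + κ * mnorm (zeF s η v h x) ^ 2)) +
        2 * ∑ a, ∑ _i : Fin n, CT * ∫ x, η x ^ 2 * |dq (ee s) h (fun y => v y a) x| ≤
      2 * (∫ x, MK f' f'' κ (Dv x) (Dv (x + h • ee s)) (ze0 s η Dv x)) +
        2 * (∑ a, ∑ _i : Fin n, CT * ∫ x, η x ^ 2 * |Dv x a s|) + err h := by
  have hη2 : ContDiff ℝ 1 (fun x => η x ^ 2) := C.hη.pow 2
  have hη2c : HasCompactSupport (fun x => η x ^ 2) := by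
    simp only [pow_two]; exact C.hηc.mul_left
  have hη2m := memLp_test hη2.continuous hη2c
  refine ⟨fun h => 2 * (L + κ) * (∫ x, mnorm (zeF s η v h x - ze0 s η Dv x) ^ 2) +
    2 * ∑ a, ∑ _i : Fin n, CT * ((eLpNorm (fun x => η x ^ 2) 2 volume).toReal *
      (eLpNorm (fun x => dq (ee s) h (fun y => v y a) x - Dv x a s) 2 volume).toReal), ?_, ?_⟩
  · have h1 := C.ze_tendsto.const_mul (2 * (L + κ))
    have h2 : Tendsto (fun h => 2 * ∑ a, ∑ _i : Fin n, CT * ((eLpNorm (fun x => η x ^ 2) 2 volume).toReal *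
      (eLpNorm (fun x => dq (ee s) h (fun y => v y a) x - Dv x a s) 2 volume).toReal)) (𝓝[≠] 0)
      (𝓝 (2 * ∑ a : Fin N, ∑ _i : Fin n, CT * ((eLpNorm (fun x => η x ^ 2) 2 volume).toReal * (0:ℝ≥0∞).toReal))) := by
      refine Tendsto.const_mul _ (tendsto_finsetSum _ fun a _ => tendsto_finsetSum _ fun i _ =>
        Tendsto.const_mul _ (Tendsto.const_mul _ ?_))
      exact (ENNReal.tendsto_toReal (by simp)).comp (dq_tendsto (C.hv a) (C.hDv a s) (C.hW a s))
    simpa using h1.add h2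
  · intro h
    have hsh := C.hDv.shift (h • ee s)
    have i1 := MK_int H C.hDv.aesm hsh.aesm C.l2ze0 κ
    have i2 := ((C.l2ze h).sub C.l2ze0).sq
    have h1 := integral_mono (MK_int H C.hDv.aesm hsh.aesm (C.l2ze h) κ) ((i1.const_mul 2).add (i2.const_mul (2 * (L + κ))))
      (fun x => by
        have := MK_add H C.hκ (Dv x) (Dv (x + h • ee s)) (ze0 s η Dv x) (zeF s η v h x - ze0 s η Dv x)
        rw [add_sub_cancel] at this
        exact this)
    simp only [Pi.add_apply] at h1
    rw [integral_add (i1.const_mul 2) (i2.const_mul _), integral_const_mul, integral_const_mul] at h1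
    have h2 : ∀ a, ∫ x, η x ^ 2 * |dq (ee s) h (fun y => v y a) x| ≤ (∫ x, η x ^ 2 * |Dv x a s|) +
        ((eLpNorm (fun x => η x ^ 2) 2 volume).toReal *
      (eLpNorm (fun x => dq (ee s) h (fun y => v y a) x - Dv x a s) 2 volume).toReal) := by
      intro a
      have m1 := memLp_dq (C.hv a) (ee s) h
      have m2 := m1.sub (C.hDv a s)
      have j1 := integrable_mul2 hη2m (C.hDv a s).abs
      have j2 := integrable_mul2 hη2m m2.abs
      have h3 := integral_mono (integrable_mul2 hη2m m1.abs) (j1.add j2) (fun x => by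
        simp only [Pi.add_apply, Pi.sub_apply, Pi.abs_apply]
        rw [← mul_add]
        refine mul_le_mul_of_nonneg_left ?_ (sq_nonneg _)
        have := abs_add_le (Dv x a s) (dq (ee s) h (fun y => v y a) x - Dv x a s)
        rwa [add_sub_cancel] at this)
      simp only [Pi.add_apply] at h3
      rw [integral_add j1 j2] at h3
      refine h3.trans (add_le_add le_rfl ?_)
      have h4 := (le_abs_self _).trans (cs2 hη2m m2.abs)
      have h5 : eLpNorm |(dq (ee s) h fun x => v x a) - fun x => Dv x a s| 2 volume =
        eLpNorm (fun x => dq (ee s) h (fun y => v y a) x - Dv x a s) 2 volume :=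
        eLpNorm_norm (dq (ee s) h (fun y => v y a) - fun x => Dv x a s)
      rw [h5] at h4
      exact h4
    have h3 : ∑ a, ∑ _i : Fin n, CT * ∫ x, η x ^ 2 * |dq (ee s) h (fun y => v y a) x| ≤
      (∑ a, ∑ _i : Fin n, CT * ∫ x, η x ^ 2 * |Dv x a s|) + ∑ a, ∑ _i : Fin n, CT * ((eLpNorm (fun x => η x ^ 2) 2 volume).toReal *
      (eLpNorm (fun x => dq (ee s) h (fun y => v y a) x - Dv x a s) 2 volume).toReal) := by
      rw [← Finset.sum_add_distrib]
      refine Finset.sum_le_sum fun a _ => ?_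
      rw [← Finset.sum_add_distrib]
      refine Finset.sum_le_sum fun i _ => ?_
      rw [← mul_add]
      exact mul_le_mul_of_nonneg_left (h2 a) C.hCT
    unfold MK at h1 ⊢
    linarith

theorem shift_seq (C : Core f' κ s η δ CT v Dv T) :
    ∃ hs : ℕ → ℝ, Tendsto hs atTop (𝓝[≠] 0) ∧
      ∀ᵐ x, Tendsto (fun j => Dv (x + hs j • ee s)) atTop (𝓝 (Dv x)) := by
  have hcomp : ∀ a i, TendstoInMeasure volume (fun (h : ℝ) x => Dv (x + h • ee s) a i - Dv x a i) (𝓝[≠] 0) (fun _ => 0) := by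
    intro a i
    refine tendstoInMeasure_of_tendsto_eLpNorm (p := 2) (by norm_num)
      (fun h => ((memLp_shift (C.hDv a i) _).sub (C.hDv a i)).aestronglyMeasurable) aestronglyMeasurable_const ?_
    have := (shift_tendsto (C.hDv a i) (ee s)).mono_left (nhdsWithin_le_nhds (s := {0}ᶜ))
    refine this.congr fun h => ?_
    congr 1
    funext x; simp
  have key : ∀ S : Finset (Fin N × Fin n), ∃ hs : ℕ → ℝ, Tendsto hs atTop (𝓝[≠] 0) ∧
      ∀ p ∈ S, ∀ᵐ x, Tendsto (fun j => Dv (x + hs j • ee s) p.1 p.2 - Dv x p.1 p.2) atTop (𝓝 0) := by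
    intro S
    induction S using Finset.induction_on with
    | empty =>
      obtain ⟨hs, h1⟩ := exists_seq_tendsto (𝓝[≠] (0:ℝ))
      exact ⟨hs, h1, by simp⟩
    | insert p S hp ih =>
      obtain ⟨hs, h1, h2⟩ := ih
      have h3 := (hcomp p.1 p.2).comp h1
      obtain ⟨ns, h4, h5⟩ := h3.exists_seq_tendsto_ae
      refine ⟨hs ∘ ns, h1.comp h4.tendsto_atTop, fun q hq => ?_⟩
      rcases Finset.mem_insert.1 hq with rfl | hq
      · exact h5
      · filter_upwards [h2 q hq] with x hx
        exact hx.comp h4.tendsto_atTop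
  obtain ⟨hs, h1, h2⟩ := key Finset.univ
  refine ⟨hs, h1, ?_⟩
  have h3 : ∀ᵐ x, ∀ p : Fin N × Fin n, Tendsto (fun j => Dv (x + hs j • ee s) p.1 p.2 - Dv x p.1 p.2) atTop (𝓝 0) :=
    ae_all_iff.2 fun p => h2 p (Finset.mem_univ _)
  filter_upwards [h3] with x hx
  rw [tendsto_pi_nhds]; intro a
  rw [tendsto_pi_nhds]; intro i
  have := (hx (a, i)).add_const (Dv x a i)
  simpa using this

end Core
end CoreSec2

section CoreSec3
variable {n N : ℕ}
variable {f f' f'' : ℝ → ℝ} {L κ δ CT : ℝ} {s : Fin n} {η : EVec n → ℝ}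
  {v : EVec n → Fin N → ℝ} {Dv T : EVec n → Fin N → Fin n → ℝ}

theorem eLpNorm_le_of_int {F : EVec n → ℝ} (hF : MemLp F 2 volume) {C : ℝ} (hC : 0 ≤ C)
    (h : ∫ x, F x * F x ≤ C ^ 2) : eLpNorm F 2 volume ≤ ENNReal.ofReal C := by
  rw [← inner_toLp hF hF, real_inner_self_eq_norm_sq, Lp.norm_toLp] at h
  rw [← ENNReal.ofReal_toReal hF.2.ne]
  exact ENNReal.ofReal_le_ofReal (le_of_sq_le_sq h hC)

namespace Core

theorem small (C : Core f' κ s η δ CT v Dv T) : ∀ᶠ h : ℝ in 𝓝[≠] 0, h ≠ 0 ∧ |h| < δ := by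
  have h1 : ∀ᶠ h : ℝ in 𝓝 0, |h| < δ := by
    have := (continuous_abs.tendsto (0:ℝ)).eventually (gt_mem_nhds (by simpa using C.hδ))
    simpa using this
  filter_upwards [self_mem_nhdsWithin, h1.filter_mono nhdsWithin_le_nhds] with h h2 h3
  exact ⟨h2, h3⟩

theorem exists_g (H : FHyp f f' f'' L) (C : Core f' κ s η δ CT v Dv T) (a : Fin N) (i : Fin n) :
    ∃ g, MemLp g 2 volume ∧ WD (ee s) (fun x => η x * Dv x a i) g := by
  obtain ⟨err, he, hr⟩ := C.rhs_bound H
  have hη2 : ContDiff ℝ 1 (fun x => η x ^ 2) := C.hη.pow 2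
  have hη2c : HasCompactSupport (fun x => η x ^ 2) := by
    simp only [pow_two]; exact C.hηc.mul_left
  obtain ⟨B, hB0, hB⟩ := test_bdd hη2.continuous hη2c
  obtain ⟨M, hM⟩ := ContDiff.lipschitzWith_of_hasCompactSupport C.hηc C.hη one_ne_zero
  set C0 : ℝ := 2 * ((L + κ) * ∫ x, mnorm (ze0 s η Dv x) ^ 2) +
    2 * (∑ a, ∑ _i : Fin n, CT * ∫ x, η x ^ 2 * |Dv x a s|) + 1 with hC0
  have hC0n : 0 ≤ C0 := by
    have h1 : 0 ≤ ∫ x, mnorm (ze0 s η Dv x) ^ 2 := integral_nonneg fun x => sq_nonneg _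
    have h2 : 0 ≤ ∑ a, ∑ _i : Fin n, CT * ∫ x, η x ^ 2 * |Dv x a s| :=
      Finset.sum_nonneg fun a _ => Finset.sum_nonneg fun i _ => mul_nonneg C.hCT
        (integral_nonneg fun x => mul_nonneg (sq_nonneg _) (abs_nonneg _))
    have h3 := mul_nonneg (add_pos H.hL C.hκ).le h1
    rw [hC0]; linarith
  refine exists_WD (C := Real.sqrt (C0 / κ) + M * (eLpNorm (fun x => Dv x a i) 2 volume).toReal)
    (memLp_mul_test (C.hDv a i) C.hη.continuous C.hηc) ?_
  filter_upwards [C.small, he.eventually (gt_mem_nhds one_pos)] with h hh herr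
  obtain ⟨h0, hδ⟩ := hh
  have hsh := C.hDv.shift (h • ee s)
  have hd := C.hDv.dqF s h
  have h1 := C.energy H h0 hδ
  have h2 := hr h
  have h3 := integral_mono (MK_int H C.hDv.aesm hsh.aesm C.l2ze0 κ) (C.l2ze0.sq.const_mul (L + κ))
    (fun x => MK_le H (Dv x) (Dv (x + h • ee s)) (ze0 s η Dv x))
  rw [integral_const_mul] at h3
  have hF : MemLp (fun x => η x * dqF s h Dv x a i) 2 volume :=
    memLp_mul_test (hd a i) C.hη.continuous C.hηc
  have h4 : κ * ∫ x, (η x * dqF s h Dv x a i) * (η x * dqF s h Dv x a i) ≤ C0 := by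
    rw [← integral_const_mul]
    have i1 : Integrable (fun x => η x ^ 2 * (Mr f' f'' (Dv x) (Dv (x + h • ee s)) (dqF s h Dv x) + κ * mnorm (dqF s h Dv x) ^ 2)) volume :=
      ((Mr_int H C.hDv.aesm hsh.aesm hd).add (hd.sq.const_mul κ)).bdd_mul hη2.continuous.aestronglyMeasurable
        (Eventually.of_forall hB)
    have h5 := integral_mono ((integrable_mul2 hF hF).const_mul κ) i1 (fun x => by
      have g1 := H.Mr_nonneg (Dv x) (Dv (x + h • ee s)) (dqF s h Dv x)
      have g2 : (dqF s h Dv x a i) ^ 2 ≤ mnorm (dqF s h Dv x) ^ 2 := sq_le_sq.2 (by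
        rw [abs_of_nonneg (mnorm_nonneg _)]; exact comp_le_mnorm _ a i)
      have g3 := mul_le_mul_of_nonneg_left (mul_le_mul_of_nonneg_left g2 C.hκ.le) (sq_nonneg (η x))
      have g4 := mul_nonneg (sq_nonneg (η x)) g1
      calc κ * ((η x * dqF s h Dv x a i) * (η x * dqF s h Dv x a i)) = η x ^ 2 * (κ * dqF s h Dv x a i ^ 2) := by ring
        _ ≤ _ := by linarith)
    linarith
  have h5 : eLpNorm (fun x => η x * dqF s h Dv x a i) 2 volume ≤ ENNReal.ofReal (Real.sqrt (C0 / κ)) := by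
    refine eLpNorm_le_of_int hF (Real.sqrt_nonneg _) ?_
    rw [Real.sq_sqrt (div_nonneg hC0n C.hκ.le), le_div_iff₀ C.hκ]
    linarith
  have h6 : eLpNorm (fun x => dq (ee s) h η x * Dv (x + h • ee s) a i) 2 volume ≤
      ENNReal.ofReal (M * (eLpNorm (fun x => Dv x a i) 2 volume).toReal) := by
    rw [ENNReal.ofReal_mul M.coe_nonneg, ENNReal.ofReal_toReal (C.hDv a i).2.ne]
    have e1 : eLpNorm (fun x => Dv (x + h • ee s) a i) 2 volume = eLpNorm (fun x => Dv x a i) 2 volume :=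
      eLpNorm_comp_measurePreserving (g := fun x => Dv x a i) (C.hDv a i).1 (mp_shift (h • ee s))
    rw [← e1]
    refine eLpNorm_le_mul_eLpNorm_of_ae_le_mul (Eventually.of_forall fun x => ?_) 2
    rw [norm_mul]
    refine mul_le_mul_of_nonneg_right ?_ (norm_nonneg _)
    have := hM.dist_le_mul (x + h • ee s) x
    rw [Real.dist_eq, dist_eq_norm, add_sub_cancel_left, norm_smul] at this
    rw [Real.norm_eq_abs, dq, abs_div, div_le_iff₀ (abs_pos.2 h0)]
    simpa using this
  have h7 : dq (ee s) h (fun x => η x * Dv x a i) =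
      (fun x => η x * dqF s h Dv x a i) + (fun x => dq (ee s) h η x * Dv (x + h • ee s) a i) := by
    funext x
    simp only [dq, dqF, Pi.add_apply]; ring
  rw [h7, ENNReal.ofReal_add (Real.sqrt_nonneg _) (mul_nonneg M.coe_nonneg ENNReal.toReal_nonneg)]
  have hqc : Continuous (dq (ee s) h η) := by
    unfold dq
    have := C.hη.continuous
    fun_prop
  refine (eLpNorm_add_le hF.1 (hqc.aestronglyMeasurable.mul (hsh a i).1) (by norm_num)).trans (add_le_add h5 h6)

theorem limit (H : FHyp f f' f'' L) (C : Core f' κ s η δ CT v Dv T) {G : EVec n → Fin N → Fin n → ℝ}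
    (hG : L2F volume G) (hGW : ∀ a i, WD (ee s) (fun x => η x * Dv x a i) (fun x => G x a i))
    {K : Set (EVec n)} (hK : IsCompact K) (hKη : K ⊆ interior {x | η x = 1}) :
    ∫ x in K, (QA f' f'' (Dv x) (G x) + κ * mnorm (G x) ^ 2) ≤
      4 * (∫ x, (QA f' f'' (Dv x) (ze0 s η Dv x) + κ * mnorm (ze0 s η Dv x) ^ 2)) +
        4 * (∑ a, ∑ _i : Fin n, CT * ∫ x, η x ^ 2 * |Dv x a s|) := by
  obtain ⟨err, he, hr⟩ := C.rhs_bound H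
  obtain ⟨hs, hs1, hs2⟩ := C.shift_seq
  have hη2 : ContDiff ℝ 1 (fun x => η x ^ 2) := C.hη.pow 2
  have hη2c : HasCompactSupport (fun x => η x ^ 2) := by
    simp only [pow_two]; exact C.hηc.mul_left
  obtain ⟨B, hB0, hB⟩ := test_bdd hη2.continuous hη2c
  have hηD : L2F volume (fun x => η x • Dv x) := fun a i =>
    memLp_mul_test (C.hDv a i) C.hη.continuous C.hηc
  have hres : ∀ {Z : EVec n → Fin N → Fin n → ℝ}, L2F volume Z → L2F (volume.restrict K) Z :=
    fun hZ a i => (hZ a i).restrict K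
  have herr2 : Tendsto (fun h => ∫ x, mnorm (G x - dqF s h (fun x => η x • Dv x) x) ^ 2) (𝓝[≠] 0) (𝓝 0) := by
    refine energy_tendsto (fun h => hG.sub (hηD.dqF s h)) fun a i => ?_
    refine (dq_tendsto (hηD a i) (hG a i) (hGW a i)).congr fun h => ?_
    rw [← eLpNorm_neg]
    congr 1
    funext x
    simp [dqF]
  obtain ⟨ρ, hρ, hρK⟩ := hK.exists_thickening_subset_open isOpen_interior hKη
  have hsmall : ∀ᶠ h : ℝ in 𝓝[≠] 0, |h| < ρ := by
    have h1 : ∀ᶠ h : ℝ in 𝓝 0, |h| < ρ := by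
      have := (continuous_abs.tendsto (0:ℝ)).eventually (gt_mem_nhds (by simpa using hρ))
      simpa using this
    exact h1.filter_mono nhdsWithin_le_nhds
  have hI : ∀ᶠ h : ℝ in 𝓝[≠] 0,
      ∫ x in K, MK f' f'' κ (Dv x) (Dv (x + h • ee s)) (G x) ≤
        4 * (∫ x, MK f' f'' κ (Dv x) (Dv (x + h • ee s)) (ze0 s η Dv x)) +
        4 * (∑ a, ∑ _i : Fin n, CT * ∫ x, η x ^ 2 * |Dv x a s|) + (2 * err h +
          2 * (L + κ) * ∫ x, mnorm (G x - dqF s h (fun x => η x • Dv x) x) ^ 2) := by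
    filter_upwards [C.small, hsmall] with h hh hhρ
    obtain ⟨h0, hδ⟩ := hh
    have hsh := C.hDv.shift (h • ee s)
    have hd := C.hDv.dqF s h
    have h1 := C.energy H h0 hδ
    have h2 := hr h
    have i1 : Integrable (fun x => η x ^ 2 * MK f' f'' κ (Dv x) (Dv (x + h • ee s)) (dqF s h Dv x)) volume :=
      (MK_int H C.hDv.aesm hsh.aesm hd κ).bdd_mul hη2.continuous.aestronglyMeasurable
        (Eventually.of_forall hB)
    have i2 := (hG.sub (hηD.dqF s h)).sq
    have hLκ : 0 ≤ 2 * (L + κ) := by linarith [H.hL, C.hκ]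
    have h3 := setIntegral_mono_on (MK_int H (hres C.hDv).aesm (hres hsh).aesm (hres hG) κ)
      (((i1.const_mul 2).add (i2.const_mul (2 * (L + κ)))).integrableOn) hK.measurableSet (fun x hx => by
        have e1' : x ∈ {x | η x = 1} := interior_subset (hKη hx)
        have e1 : η x = 1 := e1'
        have e2' : (x + h • ee s) ∈ {x | η x = 1} := interior_subset (hρK (by
          rw [Metric.mem_thickening_iff]
          refine ⟨x, hx, ?_⟩
          rw [dist_eq_norm, add_sub_cancel_left, norm_smul]; simpa using hhρ))
        have e2 : η (x + h • ee s) = 1 := e2'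
        have e3 : dqF s h (fun x => η x • Dv x) x = dqF s h Dv x := by
          simp only [dqF_eq, e1, e2, one_smul]
        have := MK_add H C.hκ (Dv x) (Dv (x + h • ee s)) (dqF s h Dv x) (G x - dqF s h Dv x)
        rw [add_sub_cancel] at this
        simp only [Pi.add_apply]
        rw [e1, e3, one_pow, one_mul]
        exact this)
    have h4 := setIntegral_le_integral (s := K) ((i1.const_mul 2).add (i2.const_mul (2 * (L + κ)))) (Eventually.of_forall fun x =>
      add_nonneg (mul_nonneg zero_le_two (mul_nonneg (sq_nonneg _) (MK_nonneg H C.hκ _ _ _)))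
        (mul_nonneg hLκ (sq_nonneg _)))
    simp only [Pi.add_apply] at h3 h4
    rw [integral_add (i1.const_mul 2) (i2.const_mul _), integral_const_mul, integral_const_mul] at h4
    have h5 : ∫ x, η x ^ 2 * MK f' f'' κ (Dv x) (Dv (x + h • ee s)) (dqF s h Dv x) ≤ _ := h1.trans h2
    linarith
  have hev := hs1.eventually hI
  have l1 := MK_tendsto H C.hκ (hres C.hDv).aesm (fun j => (hres (C.hDv.shift (hs j • ee s))).aesm) (hres hG)
    (ae_restrict_of_ae hs2)
  have l2 := MK_tendsto H C.hκ C.hDv.aesm (fun j => (C.hDv.shift (hs j • ee s)).aesm) C.l2ze0 hs2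
  have l3 := ((he.comp hs1).const_mul 2).add ((herr2.comp hs1).const_mul (2 * (L + κ)))
  have l4 := ((l2.const_mul 4).add_const (4 * (∑ a, ∑ _i : Fin n, CT * ∫ x, η x ^ 2 * |Dv x a s|))).add l3
  have := le_of_tendsto_of_tendsto l1 l4 hev
  simpa using this

end Core
end CoreSec3

section LocSec
variable {n N : ℕ} {Ω : Set (EVec n)}

theorem cutoff {K U : Set (EVec n)} (hK : IsCompact K) (hU : IsOpen U) (hKU : K ⊆ U) :
    ∃ χ : EVec n → ℝ, ContDiff ℝ 1 χ ∧ HasCompactSupport χ ∧ tsupport χ ⊆ U ∧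
      K ⊆ interior {x | χ x = 1} ∧ ∀ x, 0 ≤ χ x ∧ χ x ≤ 1 := by
  obtain ⟨M, hM, hKM, hMU⟩ := exists_compact_between hK hU hKU
  obtain ⟨χ, h1, h2, h3⟩ := exists_contMDiffMap_one_nhds_of_subset_interior (n := 1)
    (modelWithCornersSelf ℝ (EVec n)) hK.isClosed hKM
  have hs : tsupport χ ⊆ M := closure_minimal (fun x hx => by
    by_contra h; exact hx (h2 x h)) hM.isClosed
  refine ⟨χ, χ.contMDiff.contDiff, HasCompactSupport.of_support_subset_isCompact hM ((subset_tsupport _).trans hs), hs.trans hMU, ?_, h3⟩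
  exact subset_interior_iff_mem_nhdsSet.2 h1

theorem one_nhds {χ : EVec n → ℝ} {x : EVec n} (hx : x ∈ interior {x | χ x = 1}) :
    ∀ᶠ y in 𝓝 x, χ y = 1 := mem_interior_iff_mem_nhds.1 hx

theorem T_cut (hΩ : IsOpen Ω) {T₀ : EVec n → Fin N → Fin n → ℝ} (hT : MemW2inf Ω T₀) :
    ∃ CT : ℝ, 0 ≤ CT ∧ ∀ χ : EVec n → ℝ, ContDiff ℝ 1 χ → HasCompactSupport χ → tsupport χ ⊆ Ω →
      ∀ a i, ContDiff ℝ 1 (fun x => χ x * T₀ x a i) ∧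
        ∀ x ∈ interior {x | χ x = 1}, ∀ y ∈ interior {x | χ x = 1}, ∀ j,
          |fderiv ℝ (fun x => χ x * T₀ x a i) x (ee j) - fderiv ℝ (fun x => χ x * T₀ x a i) y (ee j)| ≤
            CT * dist x y := by
  obtain ⟨C, DT, -, hD, -, hL⟩ := hT
  refine ⟨C, C.coe_nonneg, fun χ hχ hc hs a i => ?_⟩
  have hD' : ∀ x ∈ Ω, HasFDerivAt T₀ (DT x) x := fun x hx => (hD x hx).hasFDerivAt (hΩ.mem_nhds hx)
  have hT1 : ContDiffOn ℝ 1 T₀ Ω := by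
    have := (contDiffOn_succ_iff_fderiv_of_isOpen (𝕜 := ℝ) (n := 0) (f := T₀) hΩ).2
      ⟨fun x hx => (hD x hx).differentiableWithinAt, by simp, by
        rw [contDiffOn_zero]
        exact hL.continuousOn.congr fun x hx => (hD' x hx).fderiv⟩
    simpa using this
  have hTc : ContDiffOn ℝ 1 (fun x => T₀ x a i) Ω := by
    have h1 : ContDiff ℝ 1 (fun z : Fin N → Fin n → ℝ => z a i) := by fun_prop
    exact h1.comp_contDiffOn hT1
  constructor
  · rw [contDiff_iff_contDiffAt]
    intro x
    by_cases hx : x ∈ tsupport χ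
    · exact hχ.contDiffAt.mul (hTc.contDiffAt (hΩ.mem_nhds (hs hx)))
    · have : (fun x => χ x * T₀ x a i) =ᶠ[𝓝 x] fun _ => 0 := by
        filter_upwards [(isClosed_tsupport χ).isOpen_compl.mem_nhds hx] with y hy
        rw [image_eq_zero_of_notMem_tsupport hy, zero_mul]
      exact contDiffAt_const.congr_of_eventuallyEq this
  · intro x hx y hy j
    have key : ∀ z ∈ interior {x | χ x = 1}, z ∈ Ω ∧
        fderiv ℝ (fun x => χ x * T₀ x a i) z (ee j) = DT z (ee j) a i := by
      intro z hz
      have hz1 : χ z = 1 := (one_nhds hz).self_of_nhds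
      have hzΩ : z ∈ Ω := hs (subset_tsupport χ (by simp [hz1]))
      refine ⟨hzΩ, ?_⟩
      have e : (fun x => χ x * T₀ x a i) =ᶠ[𝓝 z] fun x => T₀ x a i := by
        filter_upwards [one_nhds hz] with y hy
        rw [hy, one_mul]
      rw [e.fderiv_eq]
      have h1 := hasFDerivAt_pi'.1 (hasFDerivAt_pi'.1 (hD' z hzΩ) a) i
      rw [h1.fderiv]; rfl
    obtain ⟨hxΩ, ex⟩ := key x hx
    obtain ⟨hyΩ, ey⟩ := key y hy
    rw [ex, ey]
    have h2 := hL.dist_le_mul x hxΩ y hyΩ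
    rw [dist_eq_norm] at h2
    have h3 := (DT x - DT y).le_opNorm (ee j)
    have h4 : ‖(ee j : EVec n)‖ = 1 := by simp
    rw [h4, mul_one] at h3
    have h5 := norm_le_pi_norm (((DT x - DT y) (ee j)) a) i
    have h6 := norm_le_pi_norm ((DT x - DT y) (ee j)) a
    have h7 := h5.trans (h6.trans (h3.trans h2))
    simpa [Real.norm_eq_abs] using h7

theorem T_l2 (hΩ : IsOpen Ω) [IsFiniteMeasure (volume.restrict Ω)] {T₀ : EVec n → Fin N → Fin n → ℝ}
    (hT : MemW2inf Ω T₀) : L2F (volume.restrict Ω) T₀ := by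
  obtain ⟨C, DT, hb, hD, -, -⟩ := hT
  intro a i
  have hc : ContinuousOn (fun x => T₀ x a i) Ω := by
    have h1 : Continuous (fun z : Fin N → Fin n → ℝ => z a i) := by fun_prop
    exact h1.comp_continuousOn fun x hx => (hD x hx).continuousWithinAt
  refine MemLp.of_bound (hc.aestronglyMeasurable hΩ.measurableSet) C ?_
  refine (ae_restrict_iff' hΩ.measurableSet).2 (Eventually.of_forall fun x hx => ?_)
  exact (norm_le_pi_norm (T₀ x a) i).trans ((norm_le_pi_norm (T₀ x) a).trans (hb x hx))

/-- all the ingredients of the local argument -/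
theorem mk_core {f f' f'' : ℝ → ℝ} {L : ℝ} (H : FHyp f f' f'' L) (hΩ : IsOpen Ω)
    [IsFiniteMeasure (volume.restrict Ω)]
    {T₀ : EVec n → Fin N → Fin n → ℝ} (hT : MemW2inf Ω T₀) {η : EVec n → ℝ} (hη : ContDiff ℝ 1 η)
    (hηc : HasCompactSupport η) (hηs : tsupport η ⊆ Ω) :
    ∃ CT : ℝ, 0 ≤ CT ∧ ∀ k : ℕ, 0 < k → ∀ (u : EVec n → Fin N → ℝ) (Du : EVec n → Fin N → Fin n → ℝ),
      MemW12 Ω u Du → (∀ (w : EVec n → Fin N → ℝ) (Dw : EVec n → Fin N → Fin n → ℝ),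
        MemW12 Ω w Dw → FFk Ω f T₀ k Du ≤ FFk Ω f T₀ k Dw) → ∀ s : Fin n, 
      ∃ δ v Dv T, Core f' (k : ℝ)⁻¹ s η δ CT v Dv T ∧ ∀ x ∈ tsupport η, Dv x = Du x := by
  obtain ⟨CT, hCT, hcut⟩ := T_cut hΩ hT
  obtain ⟨χ, hχ, hχc, hχs, hχ1, -⟩ := cutoff hηc hΩ hηs
  obtain ⟨δ, hδ, hδV⟩ := IsCompact.exists_thickening_subset_open hηc isOpen_interior hχ1
  refine ⟨CT, hCT, fun k hk u Du hu hmin s => ⟨δ, fun x a => χ x * u x a,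
    fun x a i => χ x * Du x a i + fderiv ℝ χ x (ee i) * u x a, fun x a i => χ x * T₀ x a i, ?_, ?_⟩⟩
  swap
  · intro x hx
    have e := one_nhds (hχ1 hx)
    have e' : χ =ᶠ[𝓝 x] fun _ => 1 := e
    funext a i
    simp [e.self_of_nhds, e'.fderiv_eq]
  have hfd : ∀ i, tsupport (fun x => fderiv ℝ χ x (ee i)) ⊆ tsupport χ := fun i =>
    closure_minimal (fun x hx => by
      by_contra h; exact hx (by simp [fderiv_of_notMem_tsupport ℝ h])) (isClosed_tsupport _)
  have hVΩ : interior {x | χ x = 1} ⊆ Ω := fun z hz => by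
    have hz1 : χ z = 1 := (one_nhds hz).self_of_nhds
    exact hχs (subset_tsupport χ (by simp [hz1]))
  refine ⟨by positivity, hδ, hCT, hη, hηc, ?_, ?_, ?_, ?_, ?_, ?_, ?_⟩
  · exact fun a => memLp_glob hΩ (hu.l2u a) hχ.continuous hχc hχs
  · intro a i
    obtain ⟨c1, c2, -⟩ := memLp_fderiv_test hχ hχc (ee i)
    exact (memLp_glob hΩ (hu.l2 a i) hχ.continuous hχc hχs).add
      (memLp_glob hΩ (hu.l2u a) c1 c2 ((hfd i).trans hχs))
  · exact fun a i => WD_glob hΩ hu hχ hχc hχs a i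
  · exact fun a i => (hcut χ hχ hχc hχs a i).1
  · exact fun a i => hχc.mul_right
  · intro h hh x hx a i
    have h1 := (hcut χ hχ hχc hχs a i).2 (x + h • ee s) (hδV (by
          rw [Metric.mem_thickening_iff]
          refine ⟨x, hx, ?_⟩
          rw [dist_eq_norm, add_sub_cancel_left, norm_smul]; simpa using hh)) x (hχ1 hx) i
    rw [dist_eq_norm, add_sub_cancel_left, norm_smul] at h1
    simpa using h1
  · intro w Dw hw hDw hWD h0
    have hmem : MemW12 Ω w Dw := MemW12.of_l2 (fun a => (hw a).restrict Ω) (fun a i => (hDw a i).restrict Ω)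
      (fun φ hφ hc hs a i => (hWD a i).local hφ hc hs)
    have h1 := euler_lagrange H (T_l2 hΩ hT) k hk hu hmin hmem
    rw [setInt_eq] at h1
    · rw [← h1]
      congr 1
      funext x
      by_cases hx : x ∈ Metric.thickening δ (tsupport η)
      · have e := one_nhds (hδV hx)
        have e' : χ =ᶠ[𝓝 x] fun _ => 1 := e
        congr 1
        have e1 : (fun a i => χ x * Du x a i + fderiv ℝ χ x (ee i) * u x a) = Du x := by
          funext a i
          simp [e.self_of_nhds, e'.fderiv_eq]
        have e2 : (fun a i => χ x * T₀ x a i) = T₀ x := by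
          funext a i
          simp [e.self_of_nhds]
        rw [e1, e2]
      · rw [(h0 x hx).2]; simp [mdot]
    · intro x hx
      rw [(h0 x fun hx' => hx (hVΩ (hδV hx'))).2]; simp [mdot]

end LocSec

section LocSec2
variable {n N : ℕ} {Ω : Set (EVec n)}

theorem FHyp.QA_nonneg {f f' f'' : ℝ → ℝ} {L : ℝ} (H : FHyp f f' f'' L) (z ζ : Fin N → Fin n → ℝ) :
    0 ≤ QA f' f'' z ζ := by
  rw [← FHyp.Mr_self]; exact H.Mr_nonneg _ _ _

theorem FHyp.QA_lin {f f' f'' : ℝ → ℝ} {L M : ℝ} (H : FHyp f f' f'' L) (hM : 0 ≤ M)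
    (z ζ : Fin N → Fin n → ℝ) (h : mnorm ζ ^ 2 ≤ M * mnorm z ^ 2) :
    QA f' f'' z ζ ≤ 4 * L * M * mnorm z := by
  have h1 := H.QA_le z ζ
  have hz := mnorm_nonneg z
  have h2 : 4 * L * mnorm ζ ^ 2 ≤ 4 * L * (M * mnorm z ^ 2) :=
    mul_le_mul_of_nonneg_left h (by linarith [H.hL])
  have h3 : 0 ≤ 4 * L * M * mnorm z := by
    have := H.hL; positivity
  refine le_of_mul_le_mul_right (a := 1 + mnorm z) ?_ (by linarith)
  nlinarith

theorem loc_est {f f' f'' : ℝ → ℝ} {L : ℝ} (H : FHyp f f' f'' L) (hΩ : IsOpen Ω)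
    [IsFiniteMeasure (volume.restrict Ω)]
    {T₀ : EVec n → Fin N → Fin n → ℝ} (hT : MemW2inf Ω T₀)
    (finf : ℝ) (hfinf : Filter.Tendsto (fun t => f t / t) Filter.atTop (nhds finf))
    (hTsmall : linfNormOn Ω T₀ < ENNReal.ofReal finf) {η : EVec n → ℝ} (hη : ContDiff ℝ 1 η)
    (hηc : HasCompactSupport η) (hηs : tsupport η ⊆ Ω) :
    ∃ C : ℝ, ∀ k : ℕ, 0 < k → ∀ (u : EVec n → Fin N → ℝ) (Du : EVec n → Fin N → Fin n → ℝ),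
      MemW12 Ω u Du → (∀ (w : EVec n → Fin N → ℝ) (Dw : EVec n → Fin N → Fin n → ℝ),
        MemW12 Ω w Dw → FFk Ω f T₀ k Du ≤ FFk Ω f T₀ k Dw) → ∀ s : Fin n,
      ∃ G : EVec n → Fin N → Fin n → ℝ, L2F volume G ∧
        (∀ a i, WD (ee s) (fun x => η x * Du x a i) (fun x => G x a i)) ∧
        ∀ K, IsCompact K → K ⊆ interior {x | η x = 1} →
          ∫ x in K, (QA f' f'' (Du x) (G x) + (k : ℝ)⁻¹ * mnorm (G x) ^ 2) ≤ C := by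
  obtain ⟨CT, hCT, hcore⟩ := mk_core H hΩ hT hη hηc hηs
  obtain ⟨CU, hCU⟩ := uniform_bound H (T_l2 hΩ hT) finf hfinf hTsmall
  have hB' : ∀ i : Fin n, ∃ C, 0 ≤ C ∧ ∀ x, |fderiv ℝ η x (ee i)| ≤ C := fun i => by
    obtain ⟨c1, c2, -⟩ := memLp_fderiv_test hη hηc (ee i)
    exact test_bdd c1 c2
  choose B hB0 hB using hB'
  obtain ⟨B0, hB00, hB0'⟩ := test_bdd hη.continuous hηc
  set M : ℝ := ∑ _a : Fin N, ∑ i : Fin n, (2 * B i) ^ 2 with hMd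
  have hM : 0 ≤ M := Finset.sum_nonneg fun a _ => Finset.sum_nonneg fun i _ => sq_nonneg _
  have hLp := H.hL
  refine ⟨4 * (4 * L * M * CU + M * CU) + 4 * (∑ _a : Fin N, ∑ _i : Fin n, CT * (B0 ^ 2 * CU)), ?_⟩
  intro k hk u Du hu hmin s
  obtain ⟨δ, v, Dv, T, C, hDv⟩ := hcore k hk u Du hu hmin s
  obtain ⟨hU1, hU2⟩ := hCU k hk u Du hu hmin
  choose g hg hgW using fun a i => C.exists_g H a i
  have hκ := C.hκ
  have hI1 : Integrable (fun x => mnorm (Du x)) (volume.restrict Ω) := hu.l2.mnorm.integrable (by norm_num)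
  have hI2 : Integrable (fun x => mnorm (Du x) ^ 2) (volume.restrict Ω) := hu.l2.sq
  have hηeq : ∀ x a i, η x * Dv x a i = η x * Du x a i := fun x a i => by
    by_cases hx : x ∈ tsupport η
    · rw [hDv x hx]
    · rw [image_eq_zero_of_notMem_tsupport hx, zero_mul, zero_mul]
  have hze : ∀ x, mnorm (ze0 s η Dv x) ^ 2 ≤ M * mnorm (Dv x) ^ 2 := fun x => by
    rw [mnorm_sq, mdot, hMd, Finset.sum_mul]
    refine Finset.sum_le_sum fun a _ => ?_
    rw [Finset.sum_mul]
    refine Finset.sum_le_sum fun i _ => ?_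
    have e1 : (fderiv ℝ η x (ee i)) ^ 2 ≤ B i ^ 2 := sq_le_sq.2 (by
      rw [abs_of_nonneg (hB0 i)]; exact hB i x)
    have e2 : (Dv x a s) ^ 2 ≤ mnorm (Dv x) ^ 2 := sq_le_sq.2 (by
      rw [abs_of_nonneg (mnorm_nonneg _)]; exact comp_le_mnorm _ a s)
    have e3 := mul_le_mul e1 e2 (sq_nonneg _) (sq_nonneg _)
    simp only [ze0]
    nlinarith
  have hze0 : ∀ x, x ∉ tsupport η → mnorm (ze0 s η Dv x) ^ 2 = 0 := fun x hx => by
    rw [mnorm_sq, mdot]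
    refine Finset.sum_eq_zero fun a _ => Finset.sum_eq_zero fun i _ => ?_
    simp [ze0, fderiv_of_notMem_tsupport ℝ hx]
  refine ⟨fun x a i => g a i x, hg, fun a i => ?_, fun K hK hKη => ?_⟩
  · have := hgW a i
    simpa only [hηeq] using this
  have hlim := C.limit H (G := fun x a i => g a i x) hg hgW hK hKη
  have e1 : ∫ x in K, (QA f' f'' (Du x) (fun a i => g a i x) + (k : ℝ)⁻¹ * mnorm (fun a i => g a i x) ^ 2) =
      ∫ x in K, (QA f' f'' (Dv x) (fun a i => g a i x) + (k : ℝ)⁻¹ * mnorm (fun a i => g a i x) ^ 2) := by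
    refine setIntegral_congr_fun hK.measurableSet fun x hx => ?_
    have hz1 : η x = 1 := (one_nhds (hKη hx)).self_of_nhds
    simp only [hDv x (subset_tsupport η (by simp [hz1]))]
  rw [e1]
  refine hlim.trans (add_le_add (mul_le_mul_of_nonneg_left ?_ (by norm_num))
    (mul_le_mul_of_nonneg_left ?_ (by norm_num)))
  · calc ∫ x, (QA f' f'' (Dv x) (ze0 s η Dv x) + (k : ℝ)⁻¹ * mnorm (ze0 s η Dv x) ^ 2)
        ≤ ∫ x, Ω.indicator (fun x => 4 * L * M * mnorm (Du x) + M * ((k : ℝ)⁻¹ * mnorm (Du x) ^ 2)) x := by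
          refine integral_mono_of_nonneg (Eventually.of_forall fun x => add_nonneg (H.QA_nonneg _ _)
            (mul_nonneg hκ.le (sq_nonneg _))) ?_ (Eventually.of_forall fun x => ?_)
          · rw [integrable_indicator_iff hΩ.measurableSet]
            exact (hI1.const_mul _).add ((hI2.const_mul _).const_mul _)
          · by_cases hx : x ∈ tsupport η
            · simp only
              rw [indicator_of_mem (hηs hx), hDv x hx]
              have hz := hze x
              rw [hDv x hx] at hz
              refine add_le_add ?_ ?_
              · have := H.QA_lin hM _ _ (hze x)
                rwa [hDv x hx] at this
              · rw [mul_left_comm]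
                exact mul_le_mul_of_nonneg_left hz hκ.le
            · have h0 := hze0 x hx
              have h1 := H.QA_lin (M := 0) le_rfl (Dv x) (ze0 s η Dv x) (by rw [h0, zero_mul])
              simp only
              rw [h0]
              refine le_trans (b := 0) (by linarith) (indicator_nonneg (fun y _ => ?_) x)
              have := mnorm_nonneg (Du y)
              positivity
      _ = 4 * L * M * (∫ x in Ω, mnorm (Du x)) + M * ((k : ℝ)⁻¹ * ∫ x in Ω, mnorm (Du x) ^ 2) := by
          rw [integral_indicator hΩ.measurableSet, integral_add (hI1.const_mul _) ((hI2.const_mul _).const_mul _),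
            integral_const_mul, integral_const_mul, integral_const_mul]
      _ ≤ _ := add_le_add (mul_le_mul_of_nonneg_left hU1 (by positivity)) (mul_le_mul_of_nonneg_left hU2 hM)
  · refine Finset.sum_le_sum fun a _ => Finset.sum_le_sum fun i _ => mul_le_mul_of_nonneg_left ?_ hCT
    calc ∫ x, η x ^ 2 * |Dv x a s| ≤ ∫ x, Ω.indicator (fun x => B0 ^ 2 * mnorm (Du x)) x := by
          refine integral_mono_of_nonneg (Eventually.of_forall fun x => mul_nonneg (sq_nonneg _) (abs_nonneg _)) ?_
            (Eventually.of_forall fun x => ?_)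
          · rw [integrable_indicator_iff hΩ.measurableSet]
            exact hI1.const_mul _
          · simp only
            by_cases hx : x ∈ tsupport η
            · rw [indicator_of_mem (hηs hx), hDv x hx]
              exact mul_le_mul (sq_le_sq.2 (by rw [abs_of_nonneg hB00]; exact hB0' x)) (comp_le_mnorm _ a s)
                (abs_nonneg _) (sq_nonneg _)
            · rw [image_eq_zero_of_notMem_tsupport hx]
              refine le_trans (b := 0) (by simp) (indicator_nonneg (fun y _ => ?_) x)
              have := mnorm_nonneg (Du y)
              positivity
      _ = B0 ^ 2 * ∫ x in Ω, mnorm (Du x) := by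
          rw [integral_indicator hΩ.measurableSet, integral_const_mul]
      _ ≤ _ := mul_le_mul_of_nonneg_left hU1 (sq_nonneg _)

end LocSec2

section PatchSec
variable {n N : ℕ} {Ω : Set (EVec n)}

theorem mul_fderiv_congr {η p φ : EVec n → ℝ} (h : ∀ x ∈ tsupport φ, η x = 1) (e : EVec n) :
    (fun x => η x * p x * fderiv ℝ φ x e) = fun x => p x * fderiv ℝ φ x e := by
  funext x
  by_cases hx : x ∈ tsupport φ
  · rw [h x hx, one_mul]
  · simp [fderiv_of_notMem_tsupport ℝ hx]

theorem patch {η g : ℕ → EVec n → ℝ} {p : EVec n → ℝ} {e : EVec n} (hg : ∀ j, MemLp (g j) 2 volume)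
    (hW : ∀ j, WD e (fun x => η j x * p x) (g j)) :
    ∃ G : EVec n → ℝ, ∀ j, ∀ᵐ x, x ∈ interior {x | η j x = 1} → G x = g j x := by
  classical
  set U : ℕ → Set (EVec n) := fun j => interior {x | η j x = 1} with hU
  have hU1 : ∀ j, ∀ x ∈ U j, η j x = 1 := fun j x hx => (one_nhds hx).self_of_nhds
  have h1 : ∀ i j, ∀ᵐ x, x ∈ U i ∩ U j → g i x - g j x = 0 := fun i j => by
    refine IsOpen.ae_eq_zero_of_integral_contDiff_smul_eq_zero (isOpen_interior.inter isOpen_interior)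
      ((((hg i).sub (hg j)).locallyIntegrable (by norm_num)).locallyIntegrableOn _) fun φ hφ hc hs => ?_
    have hφ1 : ContDiff ℝ 1 φ := hφ.of_le (by exact_mod_cast le_top)
    have e1 := hW i φ hφ1 hc
    have e2 := hW j φ hφ1 hc
    rw [mul_fderiv_congr fun x hx => hU1 i x (hs hx).1] at e1
    rw [mul_fderiv_congr fun x hx => hU1 j x (hs hx).2] at e2
    have hm : MemLp φ 2 volume := memLp_test hφ1.continuous hc
    have e3 : (fun x => φ x • (g i x - g j x)) = fun x => g i x * φ x - g j x * φ x := by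
      funext x; simp only [smul_eq_mul]; ring
    have e4 := integral_sub (integrable_mul2 (hg i) hm) (integrable_mul2 (hg j) hm)
    rw [e3, e4]
    linarith
  refine ⟨fun x => if h : ∃ j, x ∈ U j then g (Nat.find h) x else 0, fun j => ?_⟩
  have h2 : ∀ᵐ x, ∀ i j, x ∈ U i ∩ U j → g i x - g j x = 0 := ae_all_iff.2 fun i => ae_all_iff.2 fun j => h1 i j
  filter_upwards [h2] with x hx hxj
  have h : ∃ j, x ∈ U j := ⟨j, hxj⟩
  rw [dif_pos h]
  exact sub_eq_zero.1 (hx _ j ⟨Nat.find_spec h, hxj⟩)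

theorem exhaust (hΩ : IsOpen Ω) : ∃ η : ℕ → EVec n → ℝ, (∀ j, ContDiff ℝ 1 (η j) ∧ HasCompactSupport (η j) ∧
    tsupport (η j) ⊆ Ω) ∧ ∀ K, IsCompact K → K ⊆ Ω → ∃ j, K ⊆ interior {x | η j x = 1} := by
  haveI : LocallyCompactSpace Ω := hΩ.locallyCompactSpace
  let X : CompactExhaustion Ω := default
  have h1 : ∀ j, ∃ χ : EVec n → ℝ, ContDiff ℝ 1 χ ∧ HasCompactSupport χ ∧ tsupport χ ⊆ Ω ∧
      Subtype.val '' (X j) ⊆ interior {x | χ x = 1} ∧ ∀ x, 0 ≤ χ x ∧ χ x ≤ 1 := fun j =>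
    cutoff ((X.isCompact j).image continuous_subtype_val) hΩ (by
      rintro _ ⟨x, -, rfl⟩; exact x.2)
  choose η h2 h3 h4 h5 h6 using h1
  refine ⟨η, fun j => ⟨h2 j, h3 j, h4 j⟩, fun K hK hKΩ => ?_⟩
  have hK' : IsCompact ((Subtype.val : Ω → EVec n) ⁻¹' K) := by
    rw [Subtype.isCompact_iff, Subtype.image_preimage_coe, inter_eq_right.2 hKΩ]; exact hK
  obtain ⟨j, hj⟩ := X.exists_superset_of_isCompact hK'
  exact ⟨j, fun x hx => h5 j ⟨⟨x, hKΩ hx⟩, hj hx, rfl⟩⟩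

theorem mnorm_sq_D2 (Z : (Fin N × Fin n) → Fin n → ℝ) :
    mnorm Z ^ 2 = ∑ s, mnorm (fun a i => Z (a, i) s) ^ 2 := by
  have h0 : 0 ≤ mdot Z Z := Finset.sum_nonneg fun _ _ => Finset.sum_nonneg fun _ _ => mul_self_nonneg _
  rw [mnorm, Real.sq_sqrt h0, mdot, Finset.sum_comm]
  refine Finset.sum_congr rfl fun s _ => ?_
  rw [mnorm_sq, mdot, Fintype.sum_prod_type]

end PatchSec

/-- **Lemma 3.3 (a priori `W^{2,2}_loc` estimates).** Each minimiser `u_k` of `𝔉_k`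
with zero mean belongs to `W^{2,2}_loc(Ω;ℝ^N)`, and for every compact `K ⊂ Ω` the
quantities `∑_s ∫_K D_zA(∇u_k)[∂_s∇u_k, ∂_s∇u_k] dx + k⁻¹∫_K |∇²u_k|² dx` are bounded
uniformly in `k`. -/
theorem W22loc_apriori_estimate
    {n N : ℕ} (Ω : Set (EVec n))
    (hΩ : IsLipschitzDomain Ω) (hΩbdd : Bornology.IsBounded Ω)
    (ν L : ℝ) (hν : 0 < ν) (hνL : ν ≤ L)
    (f f' f'' : ℝ → ℝ)
    (hderiv : ∀ t ∈ Set.Ici (0:ℝ), HasDerivWithinAt f (f' t) (Set.Ici 0) t)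
    (hderiv' : ∀ t ∈ Set.Ici (0:ℝ), HasDerivWithinAt f' (f'' t) (Set.Ici 0) t)
    (hf''cont : ContinuousOn f'' (Set.Ici 0))
    (hconv : ConvexOn ℝ (Set.Ici 0) f)
    (hf0 : f 0 = 0) (hf'0 : f' 0 = 0)
    (hgrowth : ∀ t ∈ Set.Ici (0:ℝ), ν * t - L ≤ f t ∧ f t ≤ L * (t + 1))
    (hsec : ∀ t ∈ Set.Ici (0:ℝ), f'' t ≤ L * (1 + t)⁻¹)
    (finf : ℝ) (hfinf : Filter.Tendsto (fun t => f t / t) Filter.atTop (nhds finf))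
    (T₀ : EVec n → Fin N → Fin n → ℝ)
    (hT : MemW2inf Ω T₀)
    (hTsmall : linfNormOn Ω T₀ < ENNReal.ofReal finf)
    (u : ℕ → EVec n → Fin N → ℝ) (Du : ℕ → EVec n → Fin N → Fin n → ℝ)
    (hmem : ∀ k, 0 < k → MemW12 Ω (u k) (Du k))
    (hzero : ∀ k, 0 < k → ZeroMean Ω (u k))
    (hmin : ∀ k, 0 < k →
      ∀ (w : EVec n → Fin N → ℝ) (Dw : EVec n → Fin N → Fin n → ℝ),
        MemW12 Ω w Dw → FFk Ω f T₀ k (Du k) ≤ FFk Ω f T₀ k Dw) :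
    ∃ D2 : ℕ → EVec n → (Fin N × Fin n) → Fin n → ℝ,
      (∀ k, 0 < k →
        HasLocWeakDerivOn Ω (fun x (p : Fin N × Fin n) => Du k x p.1 p.2) (D2 k) ∧
        ∀ K : Set (EVec n), IsCompact K → K ⊆ Ω →
          IntegrableOn (fun x => mnorm (D2 k x) ^ 2) K volume) ∧
      ∀ K : Set (EVec n), IsCompact K → K ⊆ Ω → ∃ C : ℝ, ∀ k, 0 < k →
        (∑ s : Fin n, ∫ x in K,
            QA f' f'' (Du k x) (fun a i => D2 k x (a, i) s)) +
          (k : ℝ)⁻¹ * ∫ x in K, mnorm (D2 k x) ^ 2 ≤ C := by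
  classical
  have hL : 0 < L := hν.trans_le hνL
  have H : FHyp f f' f'' L := ⟨hL, hderiv, hderiv', hf''cont, hconv, hf0, hf'0, fun t ht => (hgrowth t ht).2, hsec⟩
  have hΩo : IsOpen Ω := hΩ.1
  haveI : IsFiniteMeasure (volume.restrict Ω) := ⟨by
    rw [Measure.restrict_apply_univ]; exact hΩbdd.measure_lt_top⟩
  obtain ⟨η, hη, hex⟩ := exhaust hΩo
  choose C hC using fun j => loc_est H hΩo hT finf hfinf hTsmall (hη j).1 (hη j).2.1 (hη j).2.2
  have hG0 : ∀ j k s, ∃ G : EVec n → Fin N → Fin n → ℝ, 0 < k → (L2F volume G ∧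
        (∀ a i, WD (ee s) (fun x => η j x * Du k x a i) (fun x => G x a i)) ∧
        ∀ K, IsCompact K → K ⊆ interior {x | η j x = 1} →
          ∫ x in K, (QA f' f'' (Du k x) (G x) + (k : ℝ)⁻¹ * mnorm (G x) ^ 2) ≤ C j) := by
    intro j k s
    by_cases hk : 0 < k
    · obtain ⟨G, hG⟩ := hC j k hk (u k) (Du k) (hmem k hk) (hmin k hk) s
      exact ⟨G, fun _ => hG⟩
    · exact ⟨0, fun h => absurd h hk⟩
  choose G hG using hG0
  have hD0 : ∀ k s a i, ∃ D : EVec n → ℝ, 0 < k → ∀ j, ∀ᵐ x, x ∈ interior {x | η j x = 1} → D x = G j k s x a i := by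
    intro k s a i
    by_cases hk : 0 < k
    · obtain ⟨D, hD⟩ := patch (η := η) (g := fun j x => G j k s x a i) (p := fun x => Du k x a i) (e := ee s)
        (fun j => (hG j k s hk).1 a i) (fun j => (hG j k s hk).2.1 a i)
      exact ⟨D, fun _ => hD⟩
    · exact ⟨0, fun h => absurd h hk⟩
  choose D hD using hD0
  -- restriction of the patched field to a compact set
  have hDK : ∀ k, 0 < k → ∀ j K, IsCompact K → K ⊆ interior {x | η j x = 1} → ∀ s,
      (fun x a i => D k s a i x) =ᵐ[volume.restrict K] G j k s := by
    intro k hk j K hK hKj s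
    refine (ae_restrict_iff' hK.measurableSet).2 ?_
    have h1 : ∀ᵐ x, ∀ a i, x ∈ interior {x | η j x = 1} → D k s a i x = G j k s x a i :=
      ae_all_iff.2 fun a => ae_all_iff.2 fun i => hD k s a i hk j
    filter_upwards [h1] with x hx hxK
    funext a i
    exact hx a i (hKj hxK)
  have hDL2 : ∀ k, 0 < k → ∀ K, IsCompact K → K ⊆ Ω → ∀ s, L2F (volume.restrict K) (fun x a i => D k s a i x) := by
    intro k hk K hK hKΩ s a i
    obtain ⟨j, hj⟩ := hex K hK hKΩ
    refine (((hG j k s hk).1 a i).restrict K).ae_eq ?_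
    filter_upwards [hDK k hk j K hK hj s] with x hx
    exact (congrFun (congrFun hx a) i).symm
  refine ⟨fun k x p s => D k s p.1 p.2 x, fun k hk => ⟨⟨fun K hK hKΩ => ?_, ?_⟩, fun K hK hKΩ => ?_⟩, fun K hK hKΩ => ?_⟩
  · haveI : IsFiniteMeasure (volume.restrict K) := ⟨by
      rw [Measure.restrict_apply_univ]; exact hK.measure_lt_top⟩
    exact Integrable.of_eval fun p => Integrable.of_eval fun s =>
      (hDL2 k hk K hK hKΩ s p.1 p.2).integrable (by norm_num)
  · rintro φ hφ hc hs ⟨a, i⟩ s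
    obtain ⟨j, hj⟩ := hex (tsupport φ) hc hs
    have h1 := (hG j k s hk).2.1 a i φ hφ hc
    rw [mul_fderiv_congr fun x hx => (one_nhds (hj hx)).self_of_nhds] at h1
    rw [setInt_eq, setInt_eq]
    · refine h1.trans ?_
      congr 1
      refine integral_congr_ae ?_
      filter_upwards [hD k s a i hk j] with x hx
      by_cases hxs : x ∈ tsupport φ
      · rw [hx (hj hxs)]
      · rw [image_eq_zero_of_notMem_tsupport hxs, mul_zero, mul_zero]
    · intro x hx; rw [image_eq_zero_of_notMem_tsupport fun h => hx (hs h), mul_zero]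
    · intro x hx; rw [fderiv_of_notMem_tsupport ℝ (fun h => hx (hs h))]; simp
  · simp only [mnorm_sq_D2]
    exact integrable_finsetSum _ fun s _ => (hDL2 k hk K hK hKΩ s).sq
  · obtain ⟨j, hj⟩ := hex K hK hKΩ
    refine ⟨∑ _s : Fin n, C j, fun k hk => ?_⟩
    simp only [mnorm_sq_D2]
    rw [integral_finsetSum _ fun s _ => (hDL2 k hk K hK hKΩ s).sq, Finset.mul_sum, ← Finset.sum_add_distrib]
    refine Finset.sum_le_sum fun s _ => ?_
    have hDs := hDL2 k hk K hK hKΩ s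
    have hDu : AEStronglyMeasurable (Du k) (volume.restrict K) :=
      (hmem k hk).l2.aesm.mono_measure (Measure.restrict_mono hKΩ le_rfl)
    have i1 : Integrable (fun x => QA f' f'' (Du k x) (fun a i => D k s a i x)) (volume.restrict K) := by
      have := Mr_int H hDu hDu hDs
      simpa only [FHyp.Mr_self] using this
    rw [← integral_const_mul, ← integral_add i1 (hDs.sq.const_mul _)]
    refine le_trans (le_of_eq ?_) ((hG j k s hk).2.2 K hK hj)
    refine integral_congr_ae ?_
    filter_upwards [hDK k hk j K hK hj s] with x hx
    rw [← hx]
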